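/- Let p and q be primes satisfying conditions (2). Then the 2-class group of the triquadratic field F_pq = Q(√p, √(2q), √(-2)) is isomorphic to Z/2Z × Z/2Z. -/

import Mathlib

noncomputable section

open IntermediateField NumberField

/-- Conditions (2). -/
def Cond2 (p q : ℕ) : Prop :=
  p.Prime ∧ q.Prime ∧ p % 4 = 3 ∧ q % 4 = 3 ∧
    jacobiSym 2 p = -1 ∧ jacobiSym 2 q = 1 ∧ jacobiSym (p : ℤ) q = -1

/-- The triquadratic field `F_pq = ℚ(√p, √(2q), √(-2))` as a subfield of `ℂ`,
where `√(-2) = i√2`. -/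
def Ff (p q : ℕ) : IntermediateField ℚ ℂ :=
  adjoin ℚ {((Real.sqrt p : ℝ) : ℂ), ((Real.sqrt (2 * q) : ℝ) : ℂ),
    Complex.I * ((Real.sqrt 2 : ℝ) : ℂ)}

set_option linter.unusedSectionVars false

/-- `L = F(s)` with `s² ∈ F`, and `σ` is the automorphism of `L / F` sending `s` to `-s ≠ s`. -/
structure IsQuadGen {F L : Type*} [Field F] [Field L] [Algebra F L] (s : L) (σ : L ≃ₐ[F] L) :
    Prop where
  ne_zero : s ≠ 0
  neg : σ s = -s
  sq : ∃ d : F, algebraMap F L d = s ^ 2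
  gen : ∀ z : L, ∃ x y : F, z = algebraMap F L x + algebraMap F L y * s

theorem finrank_eq_two_of_gen {F L : Type*} [Field F] [Field L] [Algebra F L] {s : L}
    (hs : s ∉ (algebraMap F L).range)
    (gen : ∀ z : L, ∃ x y : F, z = algebraMap F L x + algebraMap F L y * s) :
    Module.finrank F L = 2 := by
  have hli : LinearIndependent F ![1, s] := by
    rw [LinearIndependent.pair_iff]
    intro a b h
    simp only [Algebra.smul_def, mul_one] at h
    have hb : b = 0 := by
      by_contra hb
      apply hs
      refine ⟨-a / b, ?_⟩
      have : algebraMap F L b ≠ 0 := by simpa using hb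
      rw [map_div₀, map_neg, div_eq_iff this]
      linear_combination -h
    subst hb
    simpa using h
  have hspan : ⊤ ≤ Submodule.span F (Set.range ![1, s]) := by
    intro z _
    obtain ⟨x, y, rfl⟩ := gen z
    rw [Matrix.range_cons, Matrix.range_cons, Matrix.range_empty, Set.union_empty,
      Set.singleton_union, Submodule.mem_span_pair]
    exact ⟨x, y, by simp [Algebra.smul_def]⟩
  simpa using Module.finrank_eq_card_basis (Module.Basis.mk hli hspan)

theorem exists_isQuadGen {F L : Type*} [Field F] [Field L] [CharZero F] [Algebra F L] {s : L}
    (hsq : ∃ d : F, algebraMap F L d = s ^ 2) (hs : s ∉ (algebraMap F L).range)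
    (gen : ∀ z : L, ∃ x y : F, z = algebraMap F L x + algebraMap F L y * s) :
    ∃ σ : L ≃ₐ[F] L, IsQuadGen s σ := by
  have h2 := finrank_eq_two_of_gen hs gen
  have : Algebra.IsQuadraticExtension F L := ⟨h2⟩
  have : FiniteDimensional F L := Module.finite_of_finrank_eq_succ h2
  have : ∃ σ : L ≃ₐ[F] L, σ s ≠ s := by
    by_contra! h
    apply hs
    rw [RingHom.mem_range]
    have := (IsGalois.mem_bot_iff_fixed (F := F) s).2 h
    rwa [IntermediateField.mem_bot] at this
  obtain ⟨σ, hσ⟩ := this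
  have h0 : s ≠ 0 := fun h => hs (h ▸ zero_mem _)
  refine ⟨σ, h0, ?_, hsq, gen⟩
  obtain ⟨d, hd⟩ := hsq
  have : (σ s) ^ 2 = s ^ 2 := by rw [← map_pow, ← hd, σ.commutes]
  exact (sq_eq_sq_iff_eq_or_eq_neg.1 this).resolve_left hσ

namespace IsQuadGen

section Field

variable {F L : Type*} [Field F] [Field L] [CharZero F] [Algebra F L] {s : L}
  {σ : L ≃ₐ[F] L} (h : IsQuadGen s σ)
include h

theorem charZero : CharZero L := charZero_of_injective_algebraMap (algebraMap F L).injective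

theorem notMem_range : s ∉ (algebraMap F L).range := by
  have := h.charZero
  rintro ⟨x, rfl⟩
  have h1 := h.neg
  rw [σ.commutes, eq_neg_iff_add_eq_zero, ← two_mul] at h1
  have := h.ne_zero
  simp_all

theorem finrank_eq : Module.finrank F L = 2 := finrank_eq_two_of_gen h.notMem_range h.gen

theorem apply_add (x y : F) :
    σ (algebraMap F L x + algebraMap F L y * s) = algebraMap F L x - algebraMap F L y * s := by
  simp [h.neg, sub_eq_add_neg]

theorem apply_apply (z : L) : σ (σ z) = z := by
  obtain ⟨x, y, rfl⟩ := h.gen z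
  simp [h.neg]

theorem algebraMap_norm (z : L) : algebraMap F L (Algebra.norm F z) = z * σ z := by
  have h2 := h.finrank_eq
  have : Algebra.IsQuadraticExtension F L := ⟨h2⟩
  have : FiniteDimensional F L := Module.finite_of_finrank_eq_succ h2
  have := h.charZero
  rw [Algebra.norm_eq_prod_automorphisms]
  have hc : Fintype.card (L ≃ₐ[F] L) = 2 := by
    rw [← Nat.card_eq_fintype_card, IsGalois.card_aut_eq_finrank, h2]
  have hne : (1 : L ≃ₐ[F] L) ≠ σ := by
    rintro h1
    have h3 := h.neg
    rw [← h1, AlgEquiv.one_apply, eq_neg_iff_add_eq_zero, ← two_mul] at h3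
    have := h.ne_zero
    simp_all
  classical
  have hu : (Finset.univ : Finset (L ≃ₐ[F] L)) = {1, σ} := by
    symm
    apply Finset.eq_univ_of_card
    rw [hc, Finset.card_pair hne]
  rw [hu, Finset.prod_pair hne, AlgEquiv.one_apply]

theorem norm_add (d : F) (hd : algebraMap F L d = s ^ 2) (x y : F) :
    Algebra.norm F (algebraMap F L x + algebraMap F L y * s) = x ^ 2 - d * y ^ 2 := by
  apply (algebraMap F L).injective
  rw [h.algebraMap_norm, h.apply_add]
  simp only [map_sub, map_mul, map_pow, hd]
  ring

/-- Hilbert 90 for a quadratic extension. -/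
theorem exists_eq_div {α : L} (hα : α * σ α = 1) : ∃ β : L, β ≠ 0 ∧ α * σ β = β := by
  by_cases h1 : α = -1
  · exact ⟨s, h.ne_zero, by rw [h1, h.neg]; ring⟩
  · refine ⟨1 + α, fun h2 => h1 (by linear_combination h2), ?_⟩
    rw [map_add, map_one, mul_add, hα]
    ring

end Field

end IsQuadGen

/-- The norm of any element of an extension of `F` containing a square root `s ∉ F` of `d`
is represented by the form `x² - d y²` over `F`. -/
theorem exists_norm_eq_sq_sub {F K : Type*} [Field F] [Field K] [CharZero F] [Algebra F K]
    [FiniteDimensional F K] {s : K} {d : F} (hd : algebraMap F K d = s ^ 2)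
    (hs : s ∉ (algebraMap F K).range) (α : K) :
    ∃ x y : F, Algebra.norm F α = x ^ 2 - d * y ^ 2 := by
  have hint : IsIntegral F s := .of_finite F s
  let s' : F⟮s⟯ := AdjoinSimple.gen F s
  have hsd : algebraMap F F⟮s⟯ d = s' ^ 2 := by
    apply (algebraMap F⟮s⟯ K).injective
    rw [← IsScalarTower.algebraMap_apply, hd, map_pow, AdjoinSimple.algebraMap_gen]
  have gen : ∀ z : F⟮s⟯, ∃ x y : F, z = algebraMap F _ x + algebraMap F _ y * s' := by
    intro z
    have hz : z ∈ Algebra.adjoin F {s'} := by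
      have := (adjoin.powerBasis hint).adjoin_gen_eq_top
      rw [adjoin.powerBasis_gen] at this
      rw [this]; trivial
    induction hz using Algebra.adjoin_induction with
    | mem x hx => exact ⟨0, 1, by simp_all⟩
    | algebraMap r => exact ⟨r, 0, by simp⟩
    | add a b _ _ ha hb =>
      obtain ⟨x, y, rfl⟩ := ha
      obtain ⟨x', y', rfl⟩ := hb
      exact ⟨x + x', y + y', by simp only [map_add]; ring⟩
    | mul a b _ _ ha hb =>
      obtain ⟨x, y, rfl⟩ := ha
      obtain ⟨x', y', rfl⟩ := hb
      refine ⟨x * x' + d * y * y', x * y' + x' * y, ?_⟩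
      simp only [map_add, map_mul, hsd]; ring
  have hrange : s' ∉ (algebraMap F F⟮s⟯).range := by
    rintro ⟨x, hx⟩
    apply hs
    refine ⟨x, ?_⟩
    rw [IsScalarTower.algebraMap_apply F F⟮s⟯ K, hx, AdjoinSimple.algebraMap_gen]
  obtain ⟨σ, hσ⟩ := exists_isQuadGen ⟨d, hsd⟩ hrange gen
  obtain ⟨x, y, hxy⟩ := gen (Algebra.norm F⟮s⟯ α)
  refine ⟨x, y, ?_⟩
  rw [← Algebra.norm_norm (S := F⟮s⟯), hxy, hσ.norm_add d hsd]

/-- If `r² ∈ F` and `r ∈ F(s)` with `s² ∈ F`, then `r ∈ F` or `r s ∈ F`. -/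
theorem mem_or_mul_mem_of_sq_mem {F K : Type*} [Field F] [Field K] [CharZero F] [Algebra F K]
    {r s : K} {d e : F} (hd : algebraMap F K d = s ^ 2) (he : algebraMap F K e = r ^ 2)
    {x y : F} (h : r = algebraMap F K x + algebraMap F K y * s) :
    r ∈ (algebraMap F K).range ∨ r * s ∈ (algebraMap F K).range := by
  have := charZero_of_injective_algebraMap (algebraMap F K).injective
  by_cases hx : x = 0
  · right
    exact ⟨y * d, by rw [h, hx, map_mul, hd, map_zero]; ring⟩
  by_cases hy : y = 0
  · left
    exact ⟨x, by rw [h, hy, map_zero]; ring⟩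
  left
  refine ⟨x + y * ((e - x ^ 2 - y ^ 2 * d) / (2 * x * y)), ?_⟩
  have hx' : algebraMap F K x ≠ 0 := by simpa using hx
  have hy' : algebraMap F K y ≠ 0 := by simpa using hy
  simp only [map_add, map_sub, map_mul, map_div₀, map_pow, map_ofNat, hd, he]
  rw [h]
  field_simp
  ring

section Ambiguous

section Ideals

variable {R : Type*} [CommRing R] [IsDedekindDomain R] [Module.Free ℤ R]

theorem Ideal.eq_of_le_of_absNorm_le [Module.Finite ℤ R] [CharZero R] {I J : Ideal R}
    (hI : I ≠ ⊥) (hIJ : I ≤ J)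
    (h : Ideal.absNorm I ≤ Ideal.absNorm J) : I = J := by
  obtain ⟨C, rfl⟩ := Ideal.dvd_iff_le.2 hIJ
  have hJ : Ideal.absNorm J ≠ 0 := by
    rw [Ne, Ideal.absNorm_eq_zero_iff]
    rintro rfl
    simp at hI
  have hC : Ideal.absNorm C ≠ 0 := by
    rw [Ne, Ideal.absNorm_eq_zero_iff]
    rintro rfl
    simp at hI
  rw [map_mul] at h
  have : Ideal.absNorm C = 1 := by
    have : Ideal.absNorm J * Ideal.absNorm C ≤ Ideal.absNorm J * 1 := by simpa using h
    have := Nat.le_of_mul_le_mul_left this (Nat.pos_of_ne_zero hJ)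
    omega
  rw [Ideal.absNorm_eq_one_iff] at this
  simp [this]

end Ideals

variable {F L : Type*} [Field F] [Field L] [Algebra F L]

/-- The automorphism of the ring of integers induced by an automorphism of the field. -/
def intAut (σ : L ≃ₐ[F] L) : 𝓞 L ≃ₐ[𝓞 F] 𝓞 L := RingOfIntegers.mapAlgEquiv σ

@[simp] theorem coe_intAut (σ : L ≃ₐ[F] L) (x : 𝓞 L) : ((intAut σ x : 𝓞 L) : L) = σ x := rfl

namespace IsQuadGen

variable [NumberField F] [NumberField L] {s : L} {σ : L ≃ₐ[F] L} (h : IsQuadGen s σ)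
include h

theorem intAut_intAut (x : 𝓞 L) : intAut σ (intAut σ x) = x := by
  ext; simp [h.apply_apply]

theorem algebraMap_intNorm (x : 𝓞 L) :
    algebraMap (𝓞 F) (𝓞 L) (Algebra.intNorm (𝓞 F) (𝓞 L) x) = x * intAut σ x := by
  apply RingOfIntegers.coe_injective
  rw [map_mul, ← IsScalarTower.algebraMap_apply, IsScalarTower.algebraMap_apply (𝓞 F) F L,
    Algebra.algebraMap_intNorm (K := F) (L := L), h.algebraMap_norm]
  rfl

omit h in
theorem absNorm_map_intAut (σ : L ≃ₐ[F] L) (I : Ideal (𝓞 L)) :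
    Ideal.absNorm (I.map (intAut σ)) = Ideal.absNorm I := by
  rw [← Ideal.absNorm_relNorm (R := 𝓞 F) (S := 𝓞 L), Ideal.relNorm_map_algEquiv,
    Ideal.absNorm_relNorm]

theorem finrank_ringOfIntegers : Module.finrank (𝓞 F) (𝓞 L) = 2 := by
  rw [← IsFractionRing.finrank_eq (𝓞 F) F (𝓞 L) L, h.finrank_eq]

theorem absNorm_map_algebraMap (J : Ideal (𝓞 F)) :
    Ideal.absNorm (J.map (algebraMap (𝓞 F) (𝓞 L))) = Ideal.absNorm J ^ 2 := by
  rw [Ideal.absNorm_algebraMap, h.finrank_ringOfIntegers]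

theorem map_relNorm (I : Ideal (𝓞 L)) :
    (Ideal.relNorm (𝓞 F) I).map (algebraMap (𝓞 F) (𝓞 L)) = I * I.map (intAut σ) := by
  by_cases hI : I = ⊥
  · simp [hI]
  apply Ideal.eq_of_le_of_absNorm_le
  · rw [Ne, Ideal.map_eq_bot_iff_of_injective (FaithfulSMul.algebraMap_injective _ _),
      Ideal.relNorm_eq_bot_iff]
    exact hI
  · rw [Ideal.map_relNorm, Ideal.span_le]
    rintro _ ⟨x, hx, rfl⟩
    rw [Function.comp_apply, h.algebraMap_intNorm]
    exact Ideal.mul_mem_mul hx (Ideal.mem_map_of_mem _ hx)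
  · rw [h.absNorm_map_algebraMap, Ideal.absNorm_relNorm, map_mul, absNorm_map_intAut, pow_two]

omit h in
theorem map_map_algebraMap (σ : L ≃ₐ[F] L) (J : Ideal (𝓞 F)) :
    (J.map (algebraMap (𝓞 F) (𝓞 L))).map (intAut σ) = J.map (algebraMap (𝓞 F) (𝓞 L)) := by
  have := Ideal.map_map (I := J) (algebraMap (𝓞 F) (𝓞 L))
    ((intAut σ : 𝓞 L ≃ₐ[𝓞 F] 𝓞 L) : 𝓞 L →+* 𝓞 L)
  refine this.trans ?_
  congr 1
  ext x
  simp

theorem exists_map_under_pow {P : Ideal (𝓞 L)} [P.IsPrime] (h0 : P ≠ ⊥)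
    (hP : P.map (intAut σ) = P) :
    ∃ f : ℕ, f ≠ 0 ∧ Ideal.relNorm (𝓞 F) P = (P.under (𝓞 F)) ^ f ∧
      ((P.under (𝓞 F)).map (algebraMap (𝓞 F) (𝓞 L))) ^ f = P ^ 2 := by
  have : P.IsMaximal := Ideal.IsPrime.isMaximal ‹_› h0
  have : (P.under (𝓞 F)).IsMaximal := Ideal.IsMaximal.under _ P
  have h1 := Ideal.relNorm_eq_pow_of_isMaximal P (P.under (𝓞 F))
  have h2 := h.map_relNorm P
  rw [hP, h1, Ideal.map_pow, ← pow_two] at h2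
  refine ⟨_, ?_, h1, h2⟩
  intro h3
  rw [h3, pow_zero] at h2
  have h4 : P ^ 2 ≤ P := Ideal.pow_le_self two_ne_zero
  rw [← h2, Ideal.one_eq_top, top_le_iff] at h4
  exact Ideal.IsPrime.ne_top ‹_› h4

theorem sub_mem_of_sq_dvd {P : Ideal (𝓞 L)} [hp : P.IsPrime] (h0 : P ≠ ⊥)
    (hP : P.map (intAut σ) = P)
    (hram : P ^ 2 ∣ (P.under (𝓞 F)).map (algebraMap (𝓞 F) (𝓞 L))) (x : 𝓞 L) :
    x - intAut σ x ∈ P := by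
  obtain ⟨f, hf, h1, h2⟩ := h.exists_map_under_pow h0 hP
  have hN0 : Ideal.absNorm P ≠ 0 := by rwa [Ne, Ideal.absNorm_eq_zero_iff]
  have hN1 : Ideal.absNorm P ≠ 1 := by rw [Ne, Ideal.absNorm_eq_one_iff]; exact hp.ne_top
  have hf1 : f = 1 := by
    have h3 := pow_dvd_pow_of_dvd hram f
    rw [h2, ← pow_mul] at h3
    have h4 := map_dvd Ideal.absNorm h3
    rw [map_pow, map_pow, Nat.pow_dvd_pow_iff_le_right (by omega)] at h4
    omega
  rw [hf1, pow_one] at h1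
  have hcard : Ideal.absNorm (P.under (𝓞 F)) = Ideal.absNorm P := by
    rw [← h1, Ideal.absNorm_relNorm]
  rw [Ideal.absNorm_apply, Ideal.absNorm_apply, Submodule.cardQuot_apply,
    Submodule.cardQuot_apply] at hcard
  have hfin : Finite (𝓞 L ⧸ P) := (Ideal.absNorm_ne_zero_iff P).1 hN0
  have hinj : Function.Injective
      (Ideal.quotientMap P (algebraMap (𝓞 F) (𝓞 L)) (le_refl (P.under (𝓞 F)))) :=
    Ideal.quotientMap_injective
  have hbij := (Nat.bijective_iff_injective_and_card _).2 ⟨hinj, hcard⟩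
  obtain ⟨y, hy⟩ := hbij.2 (Ideal.Quotient.mk P x)
  obtain ⟨y, rfl⟩ := Ideal.Quotient.mk_surjective y
  rw [Ideal.quotientMap_mk, Ideal.Quotient.eq] at hy
  have h5 := Ideal.mem_map_of_mem (intAut σ) hy
  rw [hP, map_sub, AlgEquiv.commutes] at h5
  simpa using sub_mem h5 hy

theorem map_under_eq_of_not_sq_dvd {P : Ideal (𝓞 L)} [hp : P.IsPrime] (h0 : P ≠ ⊥)
    (hP : P.map (intAut σ) = P)
    (hram : ¬ P ^ 2 ∣ (P.under (𝓞 F)).map (algebraMap (𝓞 F) (𝓞 L))) :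
    (P.under (𝓞 F)).map (algebraMap (𝓞 F) (𝓞 L)) = P := by
  obtain ⟨f, hf, h1, h2⟩ := h.exists_map_under_pow h0 hP
  have hpr : Prime P := Ideal.prime_of_isPrime h0 hp
  have h3 : (P.under (𝓞 F)).map (algebraMap (𝓞 F) (𝓞 L)) ∣ P ^ 2 :=
    h2 ▸ dvd_pow_self _ hf
  obtain ⟨k, hk, h4⟩ := (dvd_prime_pow hpr 2).1 h3
  rw [associated_iff_eq] at h4
  rw [h4] at hram ⊢
  interval_cases k
  · exfalso
    have h5 : (P.under (𝓞 F)).map (algebraMap (𝓞 F) (𝓞 L)) ≤ P := Ideal.map_comap_le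
    rw [h4, pow_zero, Ideal.one_eq_top, top_le_iff] at h5
    exact hp.ne_top h5
  · rw [pow_one]
  · exact absurd dvd_rfl hram

/-- The monoid of invariant ideals is generated by extended ideals and ramified primes. -/
theorem mem_of_map_eq (S : Submonoid (Ideal (𝓞 L)))
    (hext : ∀ J : Ideal (𝓞 F), J ≠ ⊥ → J.map (algebraMap (𝓞 F) (𝓞 L)) ∈ S)
    (hram : ∀ P : Ideal (𝓞 L), P.IsPrime → P ≠ ⊥ → P.map (intAut σ) = P →
      (∀ x, x - intAut σ x ∈ P) → P ∈ S)
    (I : Ideal (𝓞 L)) (hI : I ≠ ⊥) (hσ : I.map (intAut σ) = I) : I ∈ S := by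
  induction hn : Ideal.absNorm I using Nat.strong_induction_on generalizing I with
  | _ n ih =>
  by_cases htop : I = ⊤
  · rw [htop, ← Ideal.one_eq_top]; exact one_mem S
  have key : ∀ D ∈ S, D ≠ ⊤ → D.map (intAut σ) = D → D ∣ I → I ∈ S := by
    rintro D hD hDt hDσ ⟨C, rfl⟩
    have hD0 : D ≠ ⊥ := by rintro rfl; simp at hI
    have hC0 : C ≠ ⊥ := by rintro rfl; simp at hI
    refine mul_mem hD (ih (Ideal.absNorm C) ?_ C hC0 ?_ rfl)
    · rw [← hn, map_mul]
      have h1 : Ideal.absNorm D ≠ 0 := by rwa [Ne, Ideal.absNorm_eq_zero_iff]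
      have h2 : Ideal.absNorm D ≠ 1 := by rwa [Ne, Ideal.absNorm_eq_one_iff]
      have h3 : Ideal.absNorm C ≠ 0 := by rwa [Ne, Ideal.absNorm_eq_zero_iff]
      exact lt_mul_of_one_lt_left (by omega) (by omega)
    · rw [Ideal.map_mul, hDσ] at hσ
      exact mul_left_cancel₀ hD0 hσ
  obtain ⟨P, hP, hIP⟩ := Ideal.exists_le_maximal I htop
  have hP0 : P ≠ ⊥ := by rintro rfl; exact hI (le_bot_iff.1 hIP)
  have hPr : P.IsPrime := hP.isPrime
  by_cases hPσ : P.map (intAut σ) = P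
  · refine key P ?_ hP.ne_top hPσ (Ideal.dvd_iff_le.2 hIP)
    by_cases hs : P ^ 2 ∣ (P.under (𝓞 F)).map (algebraMap (𝓞 F) (𝓞 L))
    · exact hram P hPr hP0 hPσ (h.sub_mem_of_sq_dvd hP0 hPσ hs)
    · have h1 := h.map_under_eq_of_not_sq_dvd hP0 hPσ hs
      rw [← h1]
      refine hext _ fun h2 => hP0 ?_
      rw [← h1, h2, Ideal.map_bot]
  · have h1 := h.map_relNorm P
    have h0 : Ideal.relNorm (𝓞 F) P ≠ ⊥ := by rwa [Ne, Ideal.relNorm_eq_bot_iff]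
    refine key _ (hext _ h0) ?_ (map_map_algebraMap σ _) ?_
    · rw [h1]
      intro h2
      have : P * P.map (intAut σ) ≤ P := Ideal.mul_le_left
      rw [h2, top_le_iff] at this
      exact hP.ne_top this
    · rw [h1]
      have hPm : (P.map (intAut σ)).IsMaximal := Ideal.map_isMaximal_of_equiv (intAut σ)
      have hcop : IsCoprime P (P.map (intAut σ)) := by
        rw [Ideal.isCoprime_iff_sup_eq]
        exact hP.coprime_of_ne hPm (Ne.symm hPσ)
      refine hcop.mul_dvd (Ideal.dvd_iff_le.2 hIP) (Ideal.dvd_iff_le.2 ?_)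
      rw [← hσ]
      exact Ideal.map_mono hIP

/-- An ideal whose square is principal can be scaled to be invariant, provided that the class
number of the base field is odd and units of the base field that are norms of elements are norms
of units. -/
theorem exists_map_mul_eq
    (hpr : ∀ J : Ideal (𝓞 F), (J ^ 2).IsPrincipal → J.IsPrincipal)
    (hnorm : ∀ (α : L) (u : (𝓞 F)ˣ), α * σ α = algebraMap F L (u : 𝓞 F) →
      ∃ e : (𝓞 L)ˣ, ((e : 𝓞 L) : L) * σ (e : 𝓞 L) = algebraMap F L (u : 𝓞 F))
    (I : Ideal (𝓞 L)) (hI : I ≠ ⊥) (hsq : (I ^ 2).IsPrincipal) :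
    ∃ b : 𝓞 L, b ≠ 0 ∧ (Ideal.span {b} * I).map (intAut σ) = Ideal.span {b} * I := by
  obtain ⟨z, hz⟩ := hsq
  rw [Ideal.submodule_span_eq] at hz
  have hz0 : z ≠ 0 := by
    rintro rfl
    rw [Ideal.span_singleton_zero] at hz
    exact hI (pow_eq_zero_iff two_ne_zero |>.1 hz)
  have hJ2 : Ideal.relNorm (𝓞 F) I ^ 2 = Ideal.span {Algebra.intNorm (𝓞 F) (𝓞 L) z} := by
    rw [← map_pow, hz, Ideal.relNorm_singleton]
  obtain ⟨n, hn⟩ : (Ideal.relNorm (𝓞 F) I).IsPrincipal := hpr _ ⟨_, hJ2⟩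
  rw [Ideal.submodule_span_eq] at hn
  have hn0 : n ≠ 0 := by
    rintro rfl
    rw [Ideal.span_singleton_zero, Ideal.relNorm_eq_bot_iff] at hn
    exact hI hn
  have hnL : algebraMap F L n ≠ 0 := by simpa using hn0
  rw [hn, Ideal.span_singleton_pow, Ideal.span_singleton_eq_span_singleton] at hJ2
  obtain ⟨u, hu⟩ := hJ2
  have hu' : (z : L) * σ z = algebraMap F L (n ^ 2 * u : 𝓞 F) := by
    rw [hu, ← coe_intAut, ← map_mul (algebraMap (𝓞 L) L), ← h.algebraMap_intNorm,
      ← IsScalarTower.algebraMap_apply, ← IsScalarTower.algebraMap_apply]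
  obtain ⟨e, he⟩ := hnorm ((z : L) / algebraMap F L n) u (by
    rw [map_div₀, σ.commutes, div_mul_div_comm, hu', div_eq_iff (mul_ne_zero hnL hnL)]
    simp only [map_mul, map_pow]
    ring)
  have heL : ((e : 𝓞 L) : L) ≠ 0 := by simp
  have hσe : σ (e : 𝓞 L) ≠ 0 := by simp
  obtain ⟨β, hβ0, hβ⟩ := h.exists_eq_div (α := (z : L) / (algebraMap F L n * (e : 𝓞 L))) (by
    rw [map_div₀, map_mul, σ.commutes, div_mul_div_comm, hu',
      div_eq_one_iff_eq (by simp_all)]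
    have : algebraMap F L n * (e : 𝓞 L) * (algebraMap F L n * σ (e : 𝓞 L)) =
      algebraMap F L n ^ 2 * (((e : 𝓞 L) : L) * σ (e : 𝓞 L)) := by ring
    rw [this, he]
    simp only [map_mul, map_pow])
  obtain ⟨b, c, hc, rfl⟩ := IsFractionRing.div_surjective (A := 𝓞 L) β
  have hc0 : c ≠ 0 := nonZeroDivisors.ne_zero hc
  have hcL : (c : L) ≠ 0 := by simpa using hc0
  have hσc : σ (c : L) ≠ 0 := by simpa using hc0
  set b' : 𝓞 L := b * intAut σ c with hb'
  have hb0 : b' ≠ 0 := by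
    have : b ≠ 0 := by rintro rfl; simp at hβ0
    simp [hb', this, hc0]
  have key : z * intAut σ b' = algebraMap (𝓞 F) (𝓞 L) n * e * b' := by
    apply RingOfIntegers.coe_injective
    simp only [map_mul, hb', h.intAut_intAut, coe_intAut, ← IsScalarTower.algebraMap_apply]
    rw [IsScalarTower.algebraMap_apply (𝓞 F) F L]
    rw [map_div₀] at hβ
    field_simp at hβ
    linear_combination hβ
  have hnI : Ideal.span {algebraMap (𝓞 F) (𝓞 L) n} = I * I.map (intAut σ) := by
    rw [← h.map_relNorm, hn, Ideal.map_span, Set.image_singleton]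
  refine ⟨intAut σ b', by simpa using hb0, ?_⟩
  have h1 : (Ideal.span {intAut σ b'}).map (intAut σ) = Ideal.span {b'} := by
    rw [Ideal.map_span, Set.image_singleton, h.intAut_intAut]
  rw [Ideal.map_mul, h1]
  have hzb : Ideal.span {z} ≠ ⊥ := by simpa using hz0
  apply mul_left_cancel₀ hzb
  calc Ideal.span {z} * (Ideal.span {b'} * I.map (intAut σ))
      = Ideal.span {b'} * I * (I * I.map (intAut σ)) := by rw [← hz]; ring
    _ = Ideal.span {z * intAut σ b'} * I := by
      rw [← hnI, key, mul_right_comm _ (e : 𝓞 L), Ideal.span_singleton_mul_right_unit e.isUnit,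
        ← Ideal.span_singleton_mul_span_singleton _ b']
      ring
    _ = Ideal.span {z} * (Ideal.span {intAut σ b'} * I) := by
      rw [← Ideal.span_singleton_mul_span_singleton, mul_assoc]

end IsQuadGen

end Ambiguous

/-- Congruences and quadratic residues that follow from conditions (2). -/
structure Residues (p q : ℕ) : Prop where
  prime_p : p.Prime
  prime_q : q.Prime
  p_mod : p % 8 = 3
  q_mod : q % 8 = 7
  neg_one_p : ¬ IsSquare (-1 : ZMod p)
  two_p : ¬ IsSquare (2 : ZMod p)
  neg_two_p : IsSquare (-2 : ZMod p)
  neg_q_p : ¬ IsSquare (-q : ZMod p)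
  two_q_p : ¬ IsSquare (2 * q : ZMod p)
  neg_one_q : ¬ IsSquare (-1 : ZMod q)
  neg_two_q : ¬ IsSquare (-2 : ZMod q)
  p_q : ¬ IsSquare (p : ZMod q)
  two_p_q : ¬ IsSquare (2 * p : ZMod q)

theorem Cond2.residues {p q : ℕ} (h : Cond2 p q) : Residues p q := by
  obtain ⟨hp, hq, hp4, hq4, h2p, h2q, hpq⟩ := h
  have : Fact p.Prime := ⟨hp⟩
  have : Fact q.Prime := ⟨hq⟩
  have hp2 : p ≠ 2 := by omega
  have hq2 : q ≠ 2 := by omega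
  rw [← jacobiSym.legendreSym.to_jacobiSym] at h2p h2q hpq
  have hqp : legendreSym p q = 1 := by
    have := legendreSym.quadratic_reciprocity_three_mod_four hp4 hq4
    rw [this] at hpq
    omega
  have hp1 : legendreSym p (-1) = -1 := by
    rw [legendreSym.at_neg_one hp2]
    exact ZMod.χ₄_nat_three_mod_four hp4
  have hq1 : legendreSym q (-1) = -1 := by
    rw [legendreSym.at_neg_one hq2]
    exact ZMod.χ₄_nat_three_mod_four hq4
  have non {l : ℕ} [Fact l.Prime] {a : ℤ} (ha : legendreSym l a = -1) :
      ¬ IsSquare (a : ZMod l) := legendreSym.eq_neg_one_iff l |>.1 ha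
  have p8 : p % 8 = 3 := by
    have h1 : ¬ IsSquare (2 : ZMod p) := by simpa using non h2p
    rw [ZMod.exists_sq_eq_two_iff hp2] at h1
    omega
  have q8 : q % 8 = 7 := by
    have h1 : IsSquare (2 : ZMod q) := by
      have := (legendreSym.eq_one_iff' (p := q) (a := 2) ?_).1 (by exact_mod_cast h2q)
      · simpa using this
      · intro h0
        rw [legendreSym.eq_zero_iff q 2 |>.2 (by exact_mod_cast h0)] at h2q
        omega
    rw [ZMod.exists_sq_eq_two_iff hq2] at h1
    omega
  refine ⟨hp, hq, p8, q8, ?_, ?_, ?_, ?_, ?_, ?_, ?_, ?_, ?_⟩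
  · simpa using non hp1
  · simpa using non h2p
  · rw [ZMod.exists_sq_eq_neg_two_iff hp2]; omega
  · have : legendreSym p (-1 * q) = -1 := by rw [legendreSym.mul, hp1, hqp]; rfl
    simpa using non this
  · have : legendreSym p (2 * q) = -1 := by rw [legendreSym.mul, h2p, hqp]; rfl
    simpa using non this
  · simpa using non hq1
  · have : legendreSym q (-1 * 2) = -1 := by rw [legendreSym.mul, hq1, h2q]; rfl
    simpa using non this
  · simpa using non hpq
  · have : legendreSym q (2 * p) = -1 := by rw [legendreSym.mul, h2q, hpq]; rfl
    simpa using non this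

theorem exists_eq_mul_sq_of_coprime {m n D w : ℕ} (hmn : m.Coprime n) (hD : 0 < D)
    (h : m * n = D * w ^ 2) :
    ∃ D₁ D₂ a b : ℕ, D₁ * D₂ = D ∧ m = D₁ * a ^ 2 ∧ n = D₂ * b ^ 2 := by
  obtain ⟨D₁, D₂, ⟨m', rfl⟩, ⟨n', rfl⟩, rfl⟩ :=
    exists_dvd_and_dvd_of_dvd_mul (show D ∣ m * n from ⟨_, h⟩)
  have h1 : m' * n' = w ^ 2 := Nat.eq_of_mul_eq_mul_left hD (by linarith)
  have h2 : m'.Coprime n' := hmn.coprime_mul_left.coprime_mul_left_right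
  obtain ⟨a, rfl⟩ := exists_eq_pow_of_mul_eq_pow (Nat.isUnit_iff.2 h2) h1
  obtain ⟨b, rfl⟩ := exists_eq_pow_of_mul_eq_pow (Nat.isUnit_iff.2 h2.symm)
    (by rw [mul_comm]; exact h1)
  exact ⟨D₁, D₂, a, b, rfl, rfl, rfl⟩

/-- Descent on the fundamental solution of the Pell equation. -/
theorem exists_mul_sq_eq_add_one {D : ℕ} (hD : ¬ IsSquare D)
    (hev : ∀ u v : ℤ, u ^ 2 - D * v ^ 2 = 1 → Even v) :
    ∃ D₁ D₂ a b : ℕ, D₁ * D₂ = D ∧ D₂ ≠ 1 ∧ D₂ * b ^ 2 = D₁ * a ^ 2 + 1 := by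
  have hD0 : 0 < D := Nat.pos_of_ne_zero fun h => hD (h ▸ ⟨0, rfl⟩)
  have hDZ : ¬ IsSquare (D : ℤ) := by rwa [Int.isSquare_natCast_iff]
  obtain ⟨f, hf⟩ := Pell.IsFundamental.exists_of_not_isSquare (d := D) (by exact_mod_cast hD0) hDZ
  have hx := hf.1
  have hy := hf.2.1
  have hprop := f.prop
  obtain ⟨w, hw⟩ := hev _ _ hprop
  have hodd : Odd f.x := by
    rw [← Int.not_even_iff_odd]
    rintro ⟨k, hk⟩
    rw [hk, hw] at hprop
    have : (4 : ℤ) ∣ 1 := ⟨k ^ 2 - D * w ^ 2, by linear_combination -hprop⟩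
    omega
  obtain ⟨m, hm⟩ := hodd
  have hm0 : 0 < m := by omega
  have hw0 : 0 < w := by omega
  lift m to ℕ using hm0.le
  lift w to ℕ using hw0.le
  have hmw : m * (m + 1) = D * w ^ 2 := by
    rw [hm, hw] at hprop
    zify
    linarith
  obtain ⟨D₁, D₂, a, b, hDD, ha, hb⟩ :=
    exists_eq_mul_sq_of_coprime (by simp) hD0 hmw
  refine ⟨D₁, D₂, a, b, hDD, ?_, by omega⟩
  rintro rfl
  have hsol : (b : ℤ) ^ 2 - D * (a : ℤ) ^ 2 = 1 := by
    rw [mul_one] at hDD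
    have : b ^ 2 = D * a ^ 2 + 1 := by rw [← hDD]; omega
    zify at this
    linarith
  have hb1 : 1 < b := by
    by_contra hb1
    have : b ^ 2 ≤ 1 := by nlinarith
    omega
  have := hf.x_le_x (a := Pell.Solution₁.mk b a hsol) (by simpa using hb1)
  rw [Pell.Solution₁.x_mk, hm] at this
  have : 2 * m + 1 ≤ b := by exact_mod_cast this
  nlinarith

theorem even_of_two_mul {D : ℕ} (hD : D % 4 = 2) (u v : ℤ) (h : u ^ 2 - D * v ^ 2 = 1) :
    Even v := by
  obtain ⟨E, hE⟩ : ∃ E : ℕ, D = 4 * E + 2 := ⟨D / 4, by omega⟩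
  by_contra hv
  rw [Int.not_even_iff_odd] at hv
  obtain ⟨k, rfl⟩ := hv
  have h4 : u ^ 2 % 4 = 0 ∨ u ^ 2 % 4 = 1 := by
    rcases Int.even_or_odd' u with ⟨l, rfl | rfl⟩ <;> ring_nf <;> omega
  have : u ^ 2 = 4 * (E * (2 * k + 1) ^ 2 + 2 * k ^ 2 + 2 * k) + 3 := by
    rw [hE] at h; push_cast at h; linear_combination h
  omega

theorem isSquare_of_mul_sq_eq_one {R : Type*} [CommRing R] {c x : R} (h : c * x ^ 2 = 1) :
    IsSquare c := ⟨c * x, by linear_combination -c * h⟩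

theorem isSquare_neg_of_mul_sq_eq {R : Type*} [CommRing R] {c x : R} (h : c * x ^ 2 + 1 = 0) :
    IsSquare (-c) := ⟨c * x, by linear_combination -c * h⟩

namespace Residues

variable {p q : ℕ} (h : Residues p q)
include h

theorem ne : p ≠ q := by
  have := h.p_mod; have := h.q_mod; omega

theorem not_isSquare_of_factor {D l : ℕ} (hl : l.Prime) (hlD : l ∣ D) (h2 : ¬ l ^ 2 ∣ D) :
    ¬ IsSquare D := by
  rintro ⟨r, rfl⟩
  rcases (Nat.Prime.dvd_mul hl).1 hlD with hr | hr <;>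
  exact h2 (by rw [pow_two]; exact mul_dvd_mul hr hr)

/-- `x² - p y² = -2` is solvable. -/
theorem exists_eq_neg_two : ∃ x y : ℤ, x ^ 2 - p * y ^ 2 = -2 := by
  by_cases hev : ∀ u v : ℤ, u ^ 2 - p * v ^ 2 = 1 → Even v
  · obtain ⟨D₁, D₂, a, b, hD, hD2, hab⟩ := exists_mul_sq_eq_add_one h.prime_p.prime.not_isSquare hev
    exfalso
    rcases (Nat.dvd_prime h.prime_p).1 (Dvd.intro_left _ hD) with rfl | rfl
    · exact hD2 rfl
    · have hD1 : D₁ = 1 := Nat.eq_of_mul_eq_mul_right h.prime_p.pos (by simpa using hD)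
      have := congrArg (Nat.cast : ℕ → ZMod D₂) hab
      simp [hD1] at this
      exact h.neg_one_p ⟨a, by linear_combination this⟩
  · push Not at hev
    obtain ⟨u, v, huv, hv⟩ := hev
    rw [Int.not_even_iff_odd] at hv
    have p8 := h.p_mod
    have hue : Even u := by
      obtain ⟨E, hE⟩ : ∃ E : ℕ, p = 2 * E + 1 := ⟨p / 2, by omega⟩
      have : Odd ((p : ℤ) * v ^ 2) := by
        refine Odd.mul ⟨E, by omega⟩ (hv.pow)
      rw [← Int.not_odd_iff_even]
      intro hu
      have := (hu.pow (n := 2)).sub_odd this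
      rw [huv] at this
      exact absurd this (by decide)
    obtain ⟨m, hm⟩ : ∃ m : ℕ, u.natAbs = m + 1 := by
      refine Nat.exists_eq_succ_of_ne_zero fun h0 => ?_
      rw [Int.natAbs_eq_zero] at h0
      subst h0
      have := h.prime_p.pos
      have : (0 : ℤ) ≤ p * v ^ 2 := by positivity
      linarith
    have hme : Odd m := by
      have := Int.natAbs_even.2 hue
      rw [hm] at this
      exact Nat.not_even_iff_odd.1 (by simpa [Nat.even_add_one] using this)
    have hmul : m * (m + 2) = p * v.natAbs ^ 2 := by
      have h1 : (u.natAbs : ℤ) ^ 2 = u ^ 2 := Int.natAbs_sq u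
      have h2 : (v.natAbs : ℤ) ^ 2 = v ^ 2 := Int.natAbs_sq v
      rw [hm] at h1
      zify at h1 ⊢
      rw [sq_abs]
      linarith
    have hcop : m.Coprime (m + 2) := by
      rw [Nat.coprime_self_add_right]
      exact hme.coprime_two_right
    obtain ⟨D₁, D₂, a, b, hD, ha, hb⟩ := exists_eq_mul_sq_of_coprime hcop h.prime_p.pos hmul
    rcases (Nat.dvd_prime h.prime_p).1 (Dvd.intro_left _ hD) with rfl | rfl
    · exfalso
      rw [ha] at hb
      have hc := congrArg (Nat.cast : ℕ → ZMod p) hb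
      obtain rfl : D₁ = p := by simpa using hD
      push_cast at hc
      simp only [CharP.cast_eq_zero] at hc
      exact h.two_p ⟨b, by linear_combination hc⟩
    · have hD1 : D₁ = 1 := Nat.eq_of_mul_eq_mul_right h.prime_p.pos (by simpa using hD)
      refine ⟨a, b, ?_⟩
      rw [ha, hD1] at hb
      zify at hb
      linear_combination hb

/-- `2 x² - q y² = 1` is solvable. -/
theorem exists_two_mul_sub : ∃ x y : ℤ, 2 * x ^ 2 - q * y ^ 2 = 1 := by
  have hq := h.prime_q
  have q8 := h.q_mod
  obtain ⟨D₁, D₂, a, b, hD, hD2, hab⟩ := exists_mul_sq_eq_add_one (D := 2 * q)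
    (not_isSquare_of_factor h hq (by simp) (by
      rw [pow_two, Nat.mul_dvd_mul_iff_right hq.pos]
      intro h2; have := Nat.le_of_dvd two_pos h2; omega))
    (even_of_two_mul (by omega))
  have hc := congrArg (Nat.cast : ℕ → ZMod q) hab
  push_cast at hc
  have hdvd : q ∣ D₁ ∨ q ∣ D₂ := hq.dvd_mul.1 (hD ▸ Dvd.intro_left _ rfl)
  rcases hdvd with ⟨c, rfl⟩ | ⟨c, rfl⟩
  · have hc2 : c * D₂ = 2 := Nat.eq_of_mul_eq_mul_left hq.pos (by linarith)
    rcases (Nat.dvd_prime Nat.prime_two).1 (Dvd.intro_left _ hc2) with rfl | rfl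
    · exact absurd rfl hD2
    · obtain rfl : c = 1 := by omega
      refine ⟨b, a, ?_⟩
      zify at hab
      linear_combination hab
  · exfalso
    have hc2 : D₁ * c = 2 := Nat.eq_of_mul_eq_mul_left hq.pos (by linarith)
    rcases (Nat.dvd_prime Nat.prime_two).1 (Dvd.intro _ hc2) with rfl | rfl
    · exact h.neg_one_q (isSquare_neg_of_mul_sq_eq (c := 1) (x := a) (by simpa using hc.symm))
    · exact h.neg_two_q (isSquare_neg_of_mul_sq_eq (c := 2) (x := a) (by simpa using hc.symm))

/-- `q x² - 2 p y² = 1` is solvable. -/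
theorem exists_mul_sub_two_mul : ∃ x y : ℤ, q * x ^ 2 - 2 * p * y ^ 2 = 1 := by
  have hq := h.prime_q
  have hp := h.prime_p
  have q8 := h.q_mod
  have p8 := h.p_mod
  have hpq : ((p : ℕ) : ZMod p) = 0 := by simp
  have hqq : ((q : ℕ) : ZMod q) = 0 := by simp
  obtain ⟨D₁, D₂, a, b, hD, hD2, hab⟩ := exists_mul_sq_eq_add_one (D := 2 * p * q)
    (not_isSquare_of_factor h hq (by simp) (by
      rw [pow_two, Nat.mul_dvd_mul_iff_right hq.pos]
      intro h2
      rcases hq.dvd_mul.1 h2 with h2 | h2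
      · have := Nat.le_of_dvd two_pos h2; omega
      · exact h.ne ((Nat.prime_dvd_prime_iff_eq hq hp).1 h2).symm))
    (even_of_two_mul (by
      have : (p * q) % 8 = 5 := by rw [Nat.mul_mod, p8, q8]
      rw [mul_assoc]; omega))
  have hc := congrArg (Nat.cast : ℕ → ZMod q) hab
  have hc' := congrArg (Nat.cast : ℕ → ZMod p) hab
  push_cast at hc hc'
  have hdq : q ∣ D₁ ∨ q ∣ D₂ := hq.dvd_mul.1 (hD ▸ Dvd.intro_left _ rfl)
  have hdp : p ∣ D₁ ∨ p ∣ D₂ := hp.dvd_mul.1 (hD ▸ ⟨2 * q, by ring⟩)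
  have hcop : q.Coprime p := (Nat.coprime_primes hq hp).2 h.ne.symm
  have hpos : 0 < q * p := Nat.mul_pos hq.pos hp.pos
  rcases hdq with hdq | hdq <;> rcases hdp with hdp | hdp
  · exfalso
    obtain ⟨c, rfl⟩ := hcop.mul_dvd_of_dvd_of_dvd hdq hdp
    have hc2 : c * D₂ = 2 := Nat.eq_of_mul_eq_mul_left hpos (by linarith)
    rcases (Nat.dvd_prime Nat.prime_two).1 (Dvd.intro_left _ hc2) with rfl | rfl
    · exact hD2 rfl
    · exact h.two_p (isSquare_of_mul_sq_eq_one (x := b) (by simpa using hc'))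
  · exfalso
    obtain ⟨c, rfl⟩ := hdq
    obtain ⟨d, rfl⟩ := hdp
    have hc2 : c * d = 2 := Nat.eq_of_mul_eq_mul_left hpos (by linarith)
    rcases (Nat.dvd_prime Nat.prime_two).1 (Dvd.intro_left _ hc2) with rfl | rfl
    · exact h.p_q (isSquare_of_mul_sq_eq_one (x := b) (by simpa using hc))
    · exact h.two_p_q (isSquare_of_mul_sq_eq_one (c := (2 * p : ZMod q)) (x := b)
        (by simpa [mul_comm] using hc))
  · obtain ⟨c, rfl⟩ := hdp
    obtain ⟨d, rfl⟩ := hdq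
    have hc2 : c * d = 2 := Nat.eq_of_mul_eq_mul_left hpos (by linarith)
    rcases (Nat.dvd_prime Nat.prime_two).1 (Dvd.intro_left _ hc2) with rfl | rfl
    · obtain rfl : c = 2 := by omega
      refine ⟨b, a, ?_⟩
      zify at hab
      linear_combination hab
    · exact absurd (isSquare_of_mul_sq_eq_one (c := (2 * q : ZMod p)) (x := b)
        (by simpa [mul_comm] using hc')) h.two_q_p
  · exfalso
    obtain ⟨c, rfl⟩ := hcop.mul_dvd_of_dvd_of_dvd hdq hdp
    have hc2 : D₁ * c = 2 := Nat.eq_of_mul_eq_mul_left hpos (by linarith)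
    rcases (Nat.dvd_prime Nat.prime_two).1 (Dvd.intro _ hc2) with rfl | rfl
    · exact h.neg_one_q (isSquare_neg_of_mul_sq_eq (c := 1) (x := a) (by simpa using hc.symm))
    · exact h.neg_two_q (isSquare_neg_of_mul_sq_eq (c := 2) (x := a) (by simpa using hc.symm))

end Residues

namespace IsQuadGen

section Imaginary

variable {A : Type*} [Field A] [NumberField A] {s : A} {σ : A ≃ₐ[ℚ] A} (h : IsQuadGen s σ)
include h

theorem exists_int_trace (z : 𝓞 A) {x y : ℚ}
    (hz : (z : A) = algebraMap ℚ A x + algebraMap ℚ A y * s) :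
    ∃ m : ℤ, (m : ℚ) = 2 * x := by
  have hint : IsIntegral ℤ ((z : A) + σ z) :=
    (RingOfIntegers.isIntegral_coe z).add (RingOfIntegers.isIntegral_coe (intAut σ z))
  have h2 : (z : A) + σ z = algebraMap ℚ A (2 * x) := by
    rw [hz, h.apply_add, map_mul, map_ofNat]; ring
  rw [h2, isIntegral_algebraMap_iff (algebraMap ℚ A).injective] at hint
  obtain ⟨m, hm⟩ := IsIntegrallyClosed.isIntegral_iff.1 hint
  exact ⟨m, by simpa using hm⟩

theorem exists_nat_norm {d : ℕ} (hd : s ^ 2 = -(d : A)) (z : 𝓞 A) :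
    ∃ n : ℕ, Algebra.norm ℚ (z : A) = n ∧ Ideal.absNorm (Ideal.span {z}) = n := by
  refine ⟨(Algebra.norm ℤ z).natAbs, ?_, Ideal.absNorm_span_singleton z⟩
  obtain ⟨x, y, hxy⟩ := h.gen z
  have h1 := h.norm_add (-d) (by simp [hd]) x y
  rw [← hxy] at h1
  have h2 : (0 : ℚ) ≤ Algebra.norm ℚ (z : A) := by
    rw [h1]
    have : (0 : ℚ) ≤ d * y ^ 2 := by positivity
    nlinarith [sq_nonneg x]
  rw [← Algebra.coe_norm_int] at h2 ⊢
  have h3 : 0 ≤ Algebra.norm ℤ z := by exact_mod_cast h2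
  obtain ⟨k, hk⟩ := Int.eq_ofNat_of_zero_le h3
  rw [hk]; simp

/-- Units of an imaginary quadratic field other than `ℚ(√-1)` and `ℚ(√-3)`. -/
theorem unit_eq_one_or {d : ℕ} (hd : s ^ 2 = -(d : A)) (hd1 : ¬ IsSquare d)
    (hd3 : ¬ IsSquare (3 * d)) (u : (𝓞 A)ˣ) : u = 1 ∨ u = -1 := by
  obtain ⟨n, hn, hn'⟩ := h.exists_nat_norm hd u
  rw [(Ideal.span_singleton_eq_top (x := (u : 𝓞 A))).2 u.isUnit, Ideal.absNorm_top] at hn'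
  obtain ⟨x, y, hxy⟩ := h.gen (u : 𝓞 A)
  have h1 := h.norm_add (-d) (by simp [hd]) x y
  obtain ⟨m, hm⟩ := h.exists_int_trace u hxy
  have hdpos : (1 : ℚ) ≤ d := by
    have : d ≠ 0 := by rintro rfl; exact hd1 ⟨0, rfl⟩
    exact_mod_cast Nat.one_le_iff_ne_zero.2 this
  rw [← hxy, hn, ← hn'] at h1
  push_cast at h1
  have h2 : (m : ℚ) ^ 2 + 4 * d * y ^ 2 = 4 := by rw [hm]; linear_combination -4 * h1
  have nsq {k : ℕ} (hk : ¬ IsSquare k) (r : ℚ) : r * r ≠ k := by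
    intro hr
    have : IsSquare (k : ℚ) := ⟨r, hr.symm⟩
    rw [Rat.isSquare_natCast_iff] at this
    exact hk this
  have hm2 : m ^ 2 ≤ 4 := by
    have : (0 : ℚ) ≤ 4 * d * y ^ 2 := by positivity
    have : (m : ℚ) ^ 2 ≤ 4 := by linarith
    exact_mod_cast this
  have hmle : m ≤ 2 := by nlinarith
  have hmge : -2 ≤ m := by nlinarith
  have hpm : (u : A) = 1 ∨ (u : A) = -1 := by
    have fin (hm4 : (m : ℚ) ^ 2 = 4) : y = 0 := by
      have : (d : ℚ) * y ^ 2 = 0 := by linarith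
      rcases mul_eq_zero.1 this with h0 | h0
      · linarith
      · simpa using h0
    have one (hm4 : (m : ℚ) ^ 2 = 1) : False := by
      apply nsq hd3 (2 * d * y)
      push_cast
      linear_combination d * h2 - d * hm4
    interval_cases m
    · right
      refine hxy.trans ?_
      rw [fin (by norm_num), show x = -1 by norm_num at hm; linarith]
      simp
    · exact (one (by norm_num)).elim
    · refine (nsq hd1 (d * y) ?_).elim
      push_cast at h2
      linear_combination d * h2 / 4
    · exact (one (by norm_num)).elim
    · left
      refine hxy.trans ?_
      rw [fin (by norm_num), show x = 1 by norm_num at hm; linarith]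
      simp
  refine hpm.imp (fun h => ?_) (fun h => ?_)
  · exact Units.ext (RingOfIntegers.ext (by simpa using h))
  · exact Units.ext (RingOfIntegers.ext (by simpa using h))

/-- The ring of integers of `ℚ(√-2)` is norm-Euclidean. -/
theorem isPrincipal_of_sq_eq_neg_two (hd : s ^ 2 = -2) (I : Ideal (𝓞 A)) : I.IsPrincipal := by
  by_cases hI : I = ⊥
  · rw [hI]; infer_instance
  obtain ⟨x₀, hx₀, hx₀0⟩ := Submodule.exists_mem_ne_zero_of_ne_bot hI
  have hd' : s ^ 2 = -((2 : ℕ) : A) := by simp [hd]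
  let S : Set (𝓞 A) := {x | x ∈ I ∧ x ≠ 0}
  have hS : S.Nonempty := ⟨x₀, hx₀, hx₀0⟩
  let f : 𝓞 A → ℕ := fun x => Ideal.absNorm (Ideal.span {x})
  obtain ⟨x, ⟨hxI, hx0⟩, hmin⟩ : ∃ x ∈ S, ∀ y ∈ S, f x ≤ f y :=
    ⟨Function.argminOn f S hS, Function.argminOn_mem f S hS,
      fun y hy => Function.argminOn_le f S hy⟩
  refine ⟨x, le_antisymm (fun y hy => ?_) ((Ideal.span_singleton_le_iff_mem I).2 hxI)⟩
  have hxA : (x : A) ≠ 0 := by simpa using hx0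
  obtain ⟨a, b, hab⟩ := h.gen ((y : A) / x)
  have hsint : IsIntegral ℤ s := ⟨Polynomial.X ^ 2 + 2, by monicity!, by simp [hd]⟩
  obtain ⟨s', hs'⟩ : ∃ s' : 𝓞 A, (s' : A) = s := ⟨⟨s, hsint⟩, rfl⟩
  let r : 𝓞 A := y - x * (round a + round b * s')
  have hrI : r ∈ I := sub_mem hy (I.mul_mem_right _ hxI)
  have hr : (r : A) = x * (algebraMap ℚ A (a - round a) + algebraMap ℚ A (b - round b) * s) := by
    have : (y : A) = x * (algebraMap ℚ A a + algebraMap ℚ A b * s) := by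
      rw [← hab]; field_simp
    simp only [r, map_sub, map_mul, map_add, this, map_intCast, hs']
    ring
  by_cases hr0 : r = 0
  · rw [Ideal.submodule_span_eq, Ideal.mem_span_singleton]
    exact ⟨_, sub_eq_zero.1 hr0⟩
  exfalso
  have h1 := hmin r ⟨hrI, hr0⟩
  obtain ⟨n, hn, hn'⟩ := h.exists_nat_norm hd' x
  obtain ⟨k, hk, hk'⟩ := h.exists_nat_norm hd' r
  simp only [f, hn', hk'] at h1
  have hn0 : n ≠ 0 := by
    rw [← hn', Ne, Ideal.absNorm_eq_zero_iff, Ideal.span_singleton_eq_bot]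
    exact hx0
  have hpos : (0 : ℚ) < n := by exact_mod_cast Nat.pos_of_ne_zero hn0
  rw [hr, map_mul, h.norm_add (-2) (by simp [hd]), hn] at hk
  have ha := abs_sub_round a
  have hb := abs_sub_round b
  have ha2 : (a - round a) ^ 2 ≤ 1 / 4 := by
    rw [← sq_abs]; nlinarith [abs_nonneg (a - round a)]
  have hb2 : (b - round b) ^ 2 ≤ 1 / 4 := by
    rw [← sq_abs]; nlinarith [abs_nonneg (b - round b)]
  have : (k : ℚ) < n := by
    rw [← hk]
    nlinarith
  have : k < n := by exact_mod_cast this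
  omega

end Imaginary

end IsQuadGen

/-- A finite commutative group whose `2`-torsion is `{1, a, b, ab}`, with no non-trivial
element of it a square, has Sylow `2`-subgroup the Klein four-group. -/
theorem nonempty_sylow_mulEquiv {G : Type*} [CommGroup G] [Finite G] {a b : G} (ha : a ^ 2 = 1)
    (hb : b ^ 2 = 1) (htor : ∀ c : G, c ^ 2 = 1 → c = 1 ∨ c = a ∨ c = b ∨ c = a * b)
    (hna : ∀ c : G, c ^ 2 ≠ a) (hnb : ∀ c : G, c ^ 2 ≠ b) (hnab : ∀ c : G, c ^ 2 ≠ a * b)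
    (P : Sylow 2 G) :
    Nonempty (↥(P : Subgroup G) ≃* Multiplicative (ZMod 2 × ZMod 2)) := by
  have : Fact (Nat.Prime 2) := ⟨Nat.prime_two⟩
  have mem_of_sq {c : G} (hc : c ^ 2 = 1) : c ∈ P := by
    have h2 : IsPGroup 2 (Subgroup.zpowers c) := by
      rintro ⟨_, k, rfl⟩
      refine ⟨1, Subtype.ext ?_⟩
      rw [pow_one, Subgroup.coe_pow, Subgroup.coe_one, ← zpow_natCast, ← zpow_mul,
        mul_comm, zpow_mul, zpow_natCast, hc, one_zpow]
    exact h2.le_sylow_of_normal P (Subgroup.mem_zpowers c)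
  have sq_of_mem (c : G) (hc : c ∈ P) : c ^ 2 = 1 := by
    obtain ⟨k, hk⟩ : ∃ k, c ^ 2 ^ k = 1 := by
      obtain ⟨k, hk⟩ := P.isPGroup' ⟨c, hc⟩
      exact ⟨k, by simpa [Subtype.ext_iff] using hk⟩
    clear hc
    induction k with
    | zero => rw [pow_zero, pow_one] at hk; rw [hk, one_pow]
    | succ k ih =>
      rcases k with _ | k
      · simpa using hk
      apply ih
      rw [pow_succ, pow_mul] at hk
      rcases htor _ hk with h | h | h | h
      · exact h
      all_goals
        rw [pow_succ, pow_mul] at h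
        first | exact absurd h (hna _) | exact absurd h (hnb _) | exact absurd h (hnab _)
  have ha1 : a ≠ 1 := fun h => hna 1 (by rw [h, one_pow])
  have hb1 : b ≠ 1 := fun h => hnb 1 (by rw [h, one_pow])
  have hab1 : a * b ≠ 1 := fun h => hnab 1 (by rw [h, one_pow])
  have hab : a ≠ b := fun h => hab1 (by rw [← h, ← pow_two, ha])
  have hset : ((P : Subgroup G) : Set G) = {1, a, b, a * b} := by
    ext c
    constructor
    · intro hc
      exact htor c (sq_of_mem c hc)
    · rintro (rfl | rfl | rfl | rfl)
      · exact one_mem (P : Subgroup G)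
      · exact mem_of_sq ha
      · exact mem_of_sq hb
      · exact mem_of_sq (by rw [mul_pow, ha, hb, one_mul])
  have : IsKleinFour (P : Subgroup G) := by
    constructor
    · change Nat.card ((P : Subgroup G) : Set G) = 4
      rw [Nat.card_coe_set_eq, hset, Set.ncard_insert_of_notMem, Set.ncard_insert_of_notMem,
        Set.ncard_pair]
      · simpa using ha1
      · simp [hab, hb1]
      · simp [ha1.symm, hb1.symm, hab1.symm]
    · have h2 : Monoid.exponent (P : Subgroup G) ∣ 2 :=
        Monoid.exponent_dvd_of_forall_pow_eq_one fun ⟨c, hc⟩ => Subtype.ext (sq_of_mem c hc)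
      refine ((Nat.dvd_prime Nat.prime_two).1 h2).resolve_left fun h1 => ?_
      rw [Monoid.exp_eq_one_iff] at h1
      have := h1.elim (⟨a, mem_of_sq ha⟩ : (P : Subgroup G)) 1
      exact ha1 (congrArg Subtype.val this)
  exact IsKleinFour.nonempty_mulEquiv

theorem Ideal.isPrincipal_of_span_mul_isPrincipal {R : Type*} [CommRing R]
    [IsDedekindDomain R] {I : Ideal R} {b z : R} (hb : b ≠ 0)
    (h : Ideal.span {b} * I = Ideal.span {z}) : ∃ c, z = b * c ∧ I = Ideal.span {c} := by
  have hz : Ideal.span {b} ∣ Ideal.span {z} := ⟨I, h.symm⟩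
  obtain ⟨c, hc⟩ := Ideal.span_singleton_le_span_singleton.1 (Ideal.dvd_iff_le.1 hz)
  have hb' : Ideal.span {b} ≠ 0 := by simpa using hb
  refine ⟨c, hc, mul_left_cancel₀ hb' ?_⟩
  rw [h, Ideal.span_singleton_mul_span_singleton, hc]

section

variable {K : Type*} [Field K] [NumberField K]

theorem exists_coe_eq_of_sq {x : K} {n : ℤ} (hx : x ^ 2 = n) :
    ∃ w : 𝓞 K, (w : K) = x ∧ w ^ 2 = n := by
  have h : IsIntegral ℤ x := ⟨Polynomial.X ^ 2 - Polynomial.C n, by monicity!, by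
    rw [Polynomial.eval₂_sub, Polynomial.eval₂_X_pow, Polynomial.eval₂_C, hx]; simp⟩
  obtain ⟨w, hw⟩ : ∃ w : 𝓞 K, (w : K) = x := ⟨⟨x, h⟩, rfl⟩
  exact ⟨w, hw, RingOfIntegers.coe_injective (by simp only [map_pow, map_intCast, hw, hx])⟩

theorem exists_coe_eq_half {r : K} {q : ℕ} (hr : r ^ 2 = -(q : K)) (hq : q % 4 = 3) :
    ∃ w : 𝓞 K, (w : K) = (1 + r) / 2 := by
  obtain ⟨k, hk⟩ : ∃ k : ℕ, q + 1 = 4 * k := ⟨(q + 1) / 4, by omega⟩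
  have hk' : (q : K) = 4 * k - 1 := by rw [eq_sub_iff_add_eq]; exact_mod_cast hk
  have hω : IsIntegral ℤ ((1 + r) / 2) :=
    ⟨Polynomial.X ^ 2 - Polynomial.X + Polynomial.C (k : ℤ), by monicity!, by
      simp only [Polynomial.eval₂_add, Polynomial.eval₂_sub, Polynomial.eval₂_pow,
        Polynomial.eval₂_X, Polynomial.eval₂_C]
      simp only [eq_intCast, Int.cast_natCast]
      linear_combination hr / 4 - hk' / 4⟩
  exact ⟨⟨_, hω⟩, rfl⟩

/-- If a quadratic non-residue modulo `l` is a square in `𝓞 K`, primes above `l` have norm at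
least `l²`. -/
theorem sq_le_absNorm_of_not_isSquare {P : Ideal (𝓞 K)} (hP : P ≠ ⊤) {l : ℕ} (hl : l.Prime)
    (hlP : (l : 𝓞 K) ∈ P) {z : 𝓞 K} {n : ℤ} (hz : z ^ 2 = n) (hn : ¬ IsSquare (n : ZMod l)) :
    l ^ 2 ≤ Ideal.absNorm P := by
  have : Fact l.Prime := ⟨hl⟩
  have hP0 : P ≠ ⊥ := by
    rintro rfl
    rw [Ideal.mem_bot] at hlP
    exact hl.ne_zero (by exact_mod_cast hlP)
  have : Finite (𝓞 K ⧸ P) := Ideal.finiteQuotientOfFreeOfNeBot P hP0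
  have : Nontrivial (𝓞 K ⧸ P) := Ideal.Quotient.nontrivial_iff.2 hP
  have hchar : CharP (𝓞 K ⧸ P) l := by
    refine (CharP.charP_iff_prime_eq_zero hl).2 ?_
    rw [← map_natCast (Ideal.Quotient.mk P), Ideal.Quotient.eq_zero_iff_mem]
    exact hlP
  let _ : Algebra (ZMod l) (𝓞 K ⧸ P) := ZMod.algebra _ l
  have : Fintype (𝓞 K ⧸ P) := Fintype.ofFinite _
  have hcard : Ideal.absNorm P = l ^ Module.finrank (ZMod l) (𝓞 K ⧸ P) := by
    rw [Ideal.absNorm_apply, Submodule.cardQuot_apply, Nat.card_eq_fintype_card,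
      Module.card_eq_pow_finrank (K := ZMod l), ZMod.card]
  rw [hcard]
  refine Nat.pow_le_pow_right hl.pos ?_
  have h0 : 0 < Module.finrank (ZMod l) (𝓞 K ⧸ P) := Module.finrank_pos
  by_contra hlt
  have h1 : Module.finrank (ZMod l) (𝓞 K ⧸ P) = 1 := by omega
  obtain ⟨c, hc⟩ := (Module.Free.bijective_algebraMap_of_finrank_eq_one h1).2
    (Ideal.Quotient.mk P z)
  apply hn
  refine ⟨c, (algebraMap (ZMod l) (𝓞 K ⧸ P)).injective ?_⟩
  rw [map_mul, hc, ← map_mul, ← pow_two, hz]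
  simp

theorem absNorm_span_of_sq_eq {x : 𝓞 K} {n d : ℕ} (hK : Module.finrank ℚ K = 2 * d)
    (hx : x ^ 2 = n ∨ x ^ 2 = -n) : Ideal.absNorm (Ideal.span {x}) = n ^ d := by
  have h : Ideal.span {x} ^ 2 = Ideal.span {(n : 𝓞 K)} := by
    rw [Ideal.span_singleton_pow]
    rcases hx with h | h
    · rw [h]
    · rw [h, Ideal.span_singleton_neg]
  have h2 := congrArg Ideal.absNorm h
  rw [map_pow, Ideal.absNorm_span_natCast, RingOfIntegers.rank, hK, mul_comm, pow_mul] at h2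
  exact Nat.pow_left_injective (n := 2) (by norm_num) h2

end

namespace IsQuadGen

section Bottom

variable {A M : Type*} [Field A] [NumberField A] [Field M] [NumberField M] [Algebra A M]
  {s : A} {ρ : A ≃ₐ[ℚ] A} (hA : IsQuadGen s ρ) (hs : s ^ 2 = -2)
  {r : M} {τ : M ≃ₐ[A] M} (hM : IsQuadGen r τ) {p q : ℕ} (hr : r ^ 2 = -(q : M))
  (hpq : Residues p q)

include hA hM in
theorem finrank_rat_eq_four : Module.finrank ℚ M = 4 := by
  have := Module.finrank_mul_finrank ℚ A M
  rw [hA.finrank_eq, hM.finrank_eq] at this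
  exact this.symm

include hA hs hM hr hpq in
theorem exists_span_of_map_eq {I : Ideal (𝓞 M)} (hI : I ≠ ⊥) (hτ : I.map (intAut τ) = I) :
    ∃ z, I = Ideal.span {z} ∧ (intAut τ z = z ∨ intAut τ z = -z) := by
  let S : Submonoid (Ideal (𝓞 M)) :=
    { carrier := {I | ∃ z, I = Ideal.span {z} ∧ (intAut τ z = z ∨ intAut τ z = -z)}
      one_mem' := ⟨1, by simp, by simp⟩
      mul_mem' := by
        rintro _ _ ⟨z, rfl, hz⟩ ⟨w, rfl, hw⟩
        refine ⟨z * w, Ideal.span_singleton_mul_span_singleton z w, ?_⟩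
        rcases hz with hz | hz <;> rcases hw with hw | hw <;> simp [hz, hw] }
  refine hM.mem_of_map_eq S ?_ ?_ I hI hτ
  · intro J _
    obtain ⟨j, rfl⟩ := hA.isPrincipal_of_sq_eq_neg_two hs J
    rw [Ideal.submodule_span_eq, Ideal.map_span, Set.image_singleton]
    exact ⟨_, rfl, Or.inl ((intAut τ).commutes j)⟩
  · intro P hP hP0 _ hram
    obtain ⟨ω, hω'⟩ := exists_coe_eq_half hr (by have := hpq.q_mod; omega)
    obtain ⟨r', hr', hr2⟩ := exists_coe_eq_of_sq (x := r) (n := -q) (by simp [hr])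
    rw [Int.cast_neg, Int.cast_natCast] at hr2
    have hrP : r' ∈ P := by
      convert hram ω
      apply RingOfIntegers.coe_injective
      simp only [map_sub, coe_intAut, hω', hr', map_div₀, map_add, map_one, hM.neg, map_ofNat]
      ring
    obtain ⟨s', hs', hs2⟩ := exists_coe_eq_of_sq (x := algebraMap A M s) (n := -2)
      (by rw [← map_pow, hs, map_neg, map_ofNat]; simp)
    have hqP : (q : 𝓞 M) ∈ P := by
      rw [← neg_mem_iff, ← hr2]
      exact P.pow_mem_of_mem hrP 2 (by norm_num)
    have hle := sq_le_absNorm_of_not_isSquare hP.ne_top hpq.prime_q hqP hs2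
      (by simpa using hpq.neg_two_q)
    have hnorm := absNorm_span_of_sq_eq (x := r') (d := 2) (hA.finrank_rat_eq_four hM)
      (Or.inr hr2)
    have hr0 : r' ≠ 0 := by rintro rfl; exact hM.ne_zero (by rw [← hr']; simp)
    refine ⟨r', (Ideal.eq_of_le_of_absNorm_le (by simpa using hr0)
      ((Ideal.span_singleton_le_iff_mem P).2 hrP) (hnorm.trans_le hle)).symm, Or.inr ?_⟩
    apply RingOfIntegers.coe_injective
    simp only [coe_intAut, hr', hM.neg, map_neg]

include hA hs hM hr hpq in
theorem isPrincipal_of_isPrincipal_sq {I : Ideal (𝓞 M)} (h2 : (I ^ 2).IsPrincipal) :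
    I.IsPrincipal := by
  by_cases hI : I = ⊥
  · rw [hI]; infer_instance
  obtain ⟨b, hb, hbI⟩ := hM.exists_map_mul_eq
    (fun J _ => hA.isPrincipal_of_sq_eq_neg_two hs J) (fun α u _ => by
      rcases hA.unit_eq_one_or (d := 2) (by simpa using hs)
        (by rintro ⟨k, hk⟩; have : k < 2 := by nlinarith
            interval_cases k <;> omega)
        (by rintro ⟨k, hk⟩; have : k < 3 := by nlinarith
            interval_cases k <;> omega) u with rfl | rfl
      · exact ⟨1, by simp⟩
      · obtain ⟨x, y, hxy⟩ := hpq.exists_two_mul_sub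
        have hxyM : 2 * (x : M) ^ 2 - q * (y : M) ^ 2 = 1 := by exact_mod_cast hxy
        have hsM : (algebraMap A M s) ^ 2 = -2 := by rw [← map_pow, hs, map_neg, map_ofNat]
        obtain ⟨r', hr', -⟩ := exists_coe_eq_of_sq (x := r) (n := -q) (by simp [hr])
        obtain ⟨s', hs', -⟩ := exists_coe_eq_of_sq (n := -2) (by simpa using hsM)
        refine ⟨⟨x * s' + y * r', -(x * s' - y * r'), RingOfIntegers.ext ?_,
          RingOfIntegers.ext ?_⟩, ?_⟩
        · simp only [map_mul, map_neg, map_sub, map_add, hs', hr', map_intCast, map_one]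
          linear_combination hxyM - x ^ 2 * hsM + y ^ 2 * hr
        · simp only [map_mul, map_neg, map_sub, map_add, hs', hr', map_intCast, map_one]
          linear_combination hxyM - x ^ 2 * hsM + y ^ 2 * hr
        · simp only [map_mul, map_add, hs', hr', map_intCast, hM.neg, τ.commutes,
            Units.val_neg, Units.val_one, map_neg, map_one]
          linear_combination -hxyM + x ^ 2 * hsM - y ^ 2 * hr) I hI h2
  obtain ⟨z, hz, -⟩ := hA.exists_span_of_map_eq hs hM hr hpq
    (mul_ne_zero (by simpa using hb) hI) hbI
  obtain ⟨c, -, hc⟩ := Ideal.isPrincipal_of_span_mul_isPrincipal hb hz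
  exact ⟨c, by rw [hc]⟩

include hA hs hM hr hpq in
theorem odd_card_classGroup : Odd (Fintype.card (ClassGroup (𝓞 M))) := by
  by_contra hodd
  rw [Nat.not_odd_iff_even, even_iff_two_dvd] at hodd
  have : Fact (Nat.Prime 2) := ⟨Nat.prime_two⟩
  obtain ⟨c, hc⟩ := exists_prime_orderOf_dvd_card 2 hodd
  obtain ⟨I, rfl⟩ := ClassGroup.mk0_surjective c
  have h2 := pow_orderOf_eq_one (ClassGroup.mk0 I)
  rw [hc, ← map_pow, ClassGroup.mk0_eq_one_iff] at h2
  have := hA.isPrincipal_of_isPrincipal_sq hs hM hr hpq (I := I) h2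
  rw [(ClassGroup.mk0_eq_one_iff I.2).2 this, orderOf_one] at hc
  omega

end Bottom

end IsQuadGen

theorem IsQuadGen.nonempty_ringHom {F E : Type*} [Field F] [NumberField F] [Field E] [CharZero E]
    {s : F} {σ : F ≃ₐ[ℚ] F} (h : IsQuadGen s σ) {n : ℤ} (hs : s ^ 2 = n) {c : E}
    (hc : c ^ 2 = n) : Nonempty (F →+* E) := by
  have htop : adjoin ℚ {s} = ⊤ := by
    rw [eq_top_iff]
    rintro z -
    obtain ⟨x, y, rfl⟩ := h.gen z
    exact add_mem (IntermediateField.algebraMap_mem _ x)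
      (mul_mem (IntermediateField.algebraMap_mem _ y) (mem_adjoin_simple_self ℚ s))
  have hsplit : ((minpoly ℚ s).map (algebraMap ℚ E)).Splits := by
    have hdvd : minpoly ℚ s ∣ Polynomial.X ^ 2 - Polynomial.C (n : ℚ) :=
      minpoly.dvd _ _ (by simp [hs])
    have h2 : (Polynomial.X ^ 2 - Polynomial.C (n : ℚ)).map (algebraMap ℚ E) =
        (Polynomial.X - Polynomial.C c) * (Polynomial.X - Polynomial.C (-c)) := by
      rw [Polynomial.map_sub, Polynomial.map_pow, Polynomial.map_X, Polynomial.map_C,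
        map_intCast, ← hc, map_neg, map_pow]
      ring
    refine Polynomial.Splits.of_dvd ?_ ?_ (Polynomial.map_dvd (algebraMap ℚ E) hdvd)
    · rw [h2]
      exact (Polynomial.Splits.X_sub_C c).mul (Polynomial.Splits.X_sub_C (-c))
    · rw [h2]
      exact mul_ne_zero (Polynomial.X_sub_C_ne_zero _) (Polynomial.X_sub_C_ne_zero _)
  obtain ⟨f⟩ := nonempty_algHom_of_adjoin_splits (F := ℚ) (E := F) (K := E) (S := {s})
    (by rintro _ rfl; exact ⟨Algebra.IsIntegral.isIntegral _, hsplit⟩) htop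
  exact ⟨f.toRingHom⟩

section Padic

variable {p : ℕ} [Fact p.Prime]

theorem Padic.exists_sq_eq {n a : ℤ}
    (h : ‖((a ^ 2 - n : ℤ) : ℤ_[p])‖ < ‖((2 * a : ℤ) : ℤ_[p])‖ ^ 2) :
    ∃ c : ℚ_[p], c ^ 2 = n := by
  obtain ⟨z, hz, -⟩ := hensels_lemma (p := p) (F := (Polynomial.X ^ 2 - Polynomial.C (n : ℤ_[p])))
    (a := (a : ℤ_[p])) (by simpa [one_add_one_eq_two] using h)
  refine ⟨z, ?_⟩
  have : z ^ 2 = n := by simpa [sub_eq_zero] using hz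
  exact_mod_cast congrArg (fun w : ℤ_[p] => (w : ℚ_[p])) this

theorem Padic.exists_sq_eq_of_isSquare (hp : p ≠ 2) {n : ℤ} (hn : (n : ZMod p) ≠ 0)
    (h : IsSquare (n : ZMod p)) : ∃ c : ℚ_[p], c ^ 2 = n := by
  obtain ⟨b, hb⟩ := h
  obtain ⟨a, rfl⟩ := ZMod.intCast_surjective b
  refine Padic.exists_sq_eq (a := a) ?_
  have h1 : ‖((a ^ 2 - n : ℤ) : ℤ_[p])‖ < 1 := by
    rw [PadicInt.norm_int_lt_one_iff_dvd, ← ZMod.intCast_zmod_eq_zero_iff_dvd]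
    push_cast
    rw [hb]; ring
  have h2 : ‖((2 * a : ℤ) : ℤ_[p])‖ = 1 := by
    refine le_antisymm (PadicInt.norm_le_one _) (not_lt.1 fun hlt => ?_)
    rw [PadicInt.norm_int_lt_one_iff_dvd, ← ZMod.intCast_zmod_eq_zero_iff_dvd] at hlt
    push_cast at hlt
    rcases mul_eq_zero.1 hlt with h0 | h0
    · have : ((2 : ℕ) : ZMod p) = 0 := by exact_mod_cast h0
      rw [ZMod.natCast_eq_zero_iff] at this
      exact hp ((Nat.prime_dvd_prime_iff_eq Fact.out Nat.prime_two).1 this)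
    · exact hn (by rw [hb, h0, zero_mul])
  rw [h2, one_pow]
  exact h1

theorem Padic.exists_sq_eq_of_mod_eight {n : ℤ} (h : n % 8 = 1) : ∃ c : ℚ_[2], c ^ 2 = n := by
  refine Padic.exists_sq_eq (a := 1) ?_
  have h1 : ‖((1 ^ 2 - n : ℤ) : ℤ_[2])‖ ≤ 2 ^ (-3 : ℤ) := by
    have := (PadicInt.norm_int_le_pow_iff_dvd (p := 2) (k := 1 ^ 2 - n) (n := 3)).2
      (by norm_num; omega)
    exact_mod_cast this
  have h2 : ‖((2 * 1 : ℤ) : ℤ_[2])‖ = 2⁻¹ := by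
    have := PadicInt.norm_p (p := 2)
    simpa using this
  rw [h2]
  refine h1.trans_lt (by norm_num)

/-- Non-trivial `p`-adic triples can be scaled to be primitive. -/
theorem Padic.exists_primitive {x y z : ℚ_[p]} (h : x ≠ 0 ∨ y ≠ 0 ∨ z ≠ 0) :
    ∃ (c : ℚ_[p]) (x' y' z' : ℤ_[p]), c ≠ 0 ∧ x = c * x' ∧ y = c * y' ∧ z = c * z' ∧
      (IsUnit x' ∨ IsUnit y' ∨ IsUnit z') := by
  have key {u v : ℚ_[p]} (hu : u ≠ 0) (huv : ‖v‖ ≤ ‖u‖) : ∃ v' : ℤ_[p], v = u * v' :=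
    ⟨⟨v / u, by rw [norm_div]; exact div_le_one_of_le₀ huv (norm_nonneg _)⟩, by
      simp only; field_simp⟩
  have pos {u : ℚ_[p]} (hu : u ≠ 0) := norm_pos_iff.2 hu
  by_cases hx : ‖y‖ ≤ ‖x‖ ∧ ‖z‖ ≤ ‖x‖
  · have hx0 : x ≠ 0 := by rintro rfl; simp at hx; simp [hx] at h
    obtain ⟨y', hy'⟩ := key hx0 hx.1
    obtain ⟨z', hz'⟩ := key hx0 hx.2
    exact ⟨x, 1, y', z', hx0, by simp, hy', hz', by simp⟩
  by_cases hy : ‖x‖ ≤ ‖y‖ ∧ ‖z‖ ≤ ‖y‖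
  · have hy0 : y ≠ 0 := by rintro rfl; simp at hy; simp [hy] at h
    obtain ⟨x', hx'⟩ := key hy0 hy.1
    obtain ⟨z', hz'⟩ := key hy0 hy.2
    exact ⟨y, x', 1, z', hy0, hx', by simp, hz', by simp⟩
  have hz : ‖x‖ ≤ ‖z‖ ∧ ‖y‖ ≤ ‖z‖ := by grind
  have hz0 : z ≠ 0 := by rintro rfl; simp at hz; simp [hz] at h
  obtain ⟨x', hx'⟩ := key hz0 hz.1
  obtain ⟨y', hy'⟩ := key hz0 hz.2
  exact ⟨z, x', y', 1, hz0, hx', hy', by simp, by simp⟩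

theorem Padic.eq_zero_of_sq_sub_eq {n : ℤ} (hn : ¬ IsSquare (n : ZMod p)) {x y z : ℚ_[p]}
    (h : x ^ 2 - n * z ^ 2 = p * y ^ 2) : z = 0 := by
  by_contra hz
  obtain ⟨c, x, y, z, hc, rfl, rfl, rfl, hu⟩ := Padic.exists_primitive (y := y) (x := x)
    (Or.inr (Or.inr hz))
  have h' : x ^ 2 - n * z ^ 2 = p * y ^ 2 := by
    have : c ^ 2 * ((x : ℚ_[p]) ^ 2 - n * z ^ 2) = c ^ 2 * (p * y ^ 2) := by linear_combination h
    have := mul_left_cancel₀ (pow_ne_zero 2 hc) this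
    exact PadicInt.ext (by push_cast; exact this)
  have hdvd (w : ℤ_[p]) : (p : ℤ_[p]) ∣ w ↔ PadicInt.toZMod w = 0 := by
    rw [← RingHom.mem_ker, PadicInt.ker_toZMod, PadicInt.maximalIdeal_eq_span_p,
      Ideal.mem_span_singleton]
  have hmod := congrArg PadicInt.toZMod h'
  simp only [map_sub, map_mul, map_pow, map_intCast, map_natCast, CharP.cast_eq_zero,
    zero_mul] at hmod
  have hz0 : PadicInt.toZMod z = 0 := by
    by_contra h0
    refine hn ⟨PadicInt.toZMod x / PadicInt.toZMod z, ?_⟩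
    field_simp
    linear_combination -hmod
  have hx0 : PadicInt.toZMod x = 0 := by
    rw [hz0] at hmod
    simpa using hmod
  obtain ⟨x', rfl⟩ := (hdvd x).2 hx0
  obtain ⟨z', rfl⟩ := (hdvd z).2 hz0
  have hp0 : (p : ℤ_[p]) ≠ 0 := by exact_mod_cast (Fact.out : p.Prime).ne_zero
  have hy : (p : ℤ_[p]) * (x' ^ 2 - n * z' ^ 2) = y ^ 2 :=
    mul_left_cancel₀ hp0 (by linear_combination h')
  obtain ⟨y', rfl⟩ := PadicInt.prime_p.dvd_of_dvd_pow ⟨_, hy.symm⟩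
  have hpu : ¬ IsUnit (p : ℤ_[p]) := PadicInt.prime_p.not_isUnit
  rcases hu with h | h | h <;> exact hpu (isUnit_of_mul_isUnit_left h)

end Padic

theorem PadicInt.exists_primitive_mod_eight {x y z : ℚ_[2]} (h : x ≠ 0 ∨ y ≠ 0 ∨ z ≠ 0)
    {a b c : ℤ} (heq : a * x ^ 2 + b * y ^ 2 = c * z ^ 2) :
    ∃ x y z : ZMod 8, a * x ^ 2 + b * y ^ 2 = c * z ^ 2 ∧ (IsUnit x ∨ IsUnit y ∨ IsUnit z) := by
  obtain ⟨d, x, y, z, hd, rfl, rfl, rfl, hu⟩ := Padic.exists_primitive h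
  have h' : a * x ^ 2 + b * y ^ 2 = c * z ^ 2 := by
    have : d ^ 2 * (a * (x : ℚ_[2]) ^ 2 + b * y ^ 2) = d ^ 2 * (c * z ^ 2) := by
      linear_combination heq
    have := mul_left_cancel₀ (pow_ne_zero 2 hd) this
    exact PadicInt.ext (by push_cast; exact this)
  let f : ℤ_[2] →+* ZMod 8 := PadicInt.toZModPow 3
  refine ⟨f x, f y, f z, ?_, ?_⟩
  · have := congrArg f h'
    simpa only [map_add, map_mul, map_pow, map_intCast] using this
  · exact hu.imp (fun h => h.map f) (Or.imp (fun h => h.map f) (fun h => h.map f))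

theorem Padic.not_add_two_mul_sq {p : ℕ} (hp : p % 8 = 3) (x y : ℚ_[2]) :
    x ^ 2 + 2 * y ^ 2 ≠ -p := by
  intro h
  obtain ⟨x, y, z, h, hu⟩ := PadicInt.exists_primitive_mod_eight (x := x) (y := y) (z := 1)
    (by simp) (a := 1) (b := 2) (c := -p) (by push_cast; linear_combination h)
  have hp' : (p : ZMod 8) = 3 := by
    rw [← ZMod.natCast_mod, hp]; rfl
  push_cast at h
  rw [hp'] at h
  revert x y z
  decide

theorem Padic.not_sq_eq_mul {p : ℕ} (hp : p % 8 = 3) (z w : ℚ_[2]) :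
    z ^ 2 ≠ p * (1 + w ^ 2) := by
  intro h
  obtain ⟨x, y, z, h, hu⟩ := PadicInt.exists_primitive_mod_eight (x := 1) (y := w) (z := z)
    (by simp) (a := p) (b := p) (c := 1) (by push_cast; linear_combination -h)
  have hp' : (p : ZMod 8) = 3 := by
    rw [← ZMod.natCast_mod, hp]; rfl
  push_cast at h
  rw [hp'] at h
  revert x y z
  decide

section TowerData

variable {A B M K : Type*} [Field A] [Field B] [Field M] [Field K] [NumberField A] [NumberField B]
  [NumberField M] [NumberField K] [Algebra A M] [Algebra B M] [Algebra M K] [Algebra A K]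
  [Algebra B K] [IsScalarTower A M K] [IsScalarTower B M K]

/-- The subfields `A = ℚ(√-2)`, `B = ℚ(√-q)` and `M = AB` of `K = M(√p)`, with integral
generators and Galois involutions; `ω = (1 + √-q) / 2`. -/
structure Tower (p q : ℕ) (a : 𝓞 A) (b : 𝓞 B) (ω : 𝓞 M) (s : 𝓞 K) (ρ : A ≃ₐ[ℚ] A)
    (β : B ≃ₐ[ℚ] B) (κ : M ≃ₐ[B] M) (τ : M ≃ₐ[A] M) (σ : K ≃ₐ[M] K) : Prop where
  res : Residues p q
  a_sq : a ^ 2 = -2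
  b_sq : b ^ 2 = -(q : 𝓞 B)
  s_sq : s ^ 2 = (p : 𝓞 K)
  two_mul_ω : 2 * ω = 1 + algebraMap (𝓞 B) (𝓞 M) b
  hA : IsQuadGen (a : A) ρ
  hB : IsQuadGen (b : B) β
  hκ : IsQuadGen (algebraMap A M a) κ
  hτ : IsQuadGen (algebraMap B M b) τ
  hσ : IsQuadGen (s : K) σ

namespace Tower

variable {p q : ℕ} {a : 𝓞 A} {b : 𝓞 B} {ω : 𝓞 M} {s : 𝓞 K} {ρ : A ≃ₐ[ℚ] A}
    {β : B ≃ₐ[ℚ] B} {κ : M ≃ₐ[B] M} {τ : M ≃ₐ[A] M} {σ : K ≃ₐ[M] K}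
    (t : Tower p q a b ω s ρ β κ τ σ)

include t

theorem coe_a_sq : (a : A) ^ 2 = -2 := by
  have := congrArg (algebraMap (𝓞 A) A) t.a_sq
  simpa only [map_pow, map_neg, map_ofNat] using this

theorem coe_b_sq : (algebraMap B M b) ^ 2 = -(q : M) := by
  have := congrArg (fun z : 𝓞 B => algebraMap B M z) t.b_sq
  simpa only [map_pow, map_neg, map_natCast] using this

theorem coe_s_sq : (s : K) ^ 2 = p := by
  have := congrArg (algebraMap (𝓞 K) K) t.s_sq
  simpa only [map_pow, map_natCast] using this

theorem intAut_s : intAut σ s = -s :=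
  RingOfIntegers.coe_injective (by simp only [coe_intAut, t.hσ.neg, map_neg])

theorem odd_card_classGroup : Odd (Fintype.card (ClassGroup (𝓞 M))) :=
  t.hA.odd_card_classGroup t.coe_a_sq t.hτ t.coe_b_sq t.res

theorem unit_A_eq (u : (𝓞 A)ˣ) : u = 1 ∨ u = -1 :=
  t.hA.unit_eq_one_or (d := 2) (by simpa using t.coe_a_sq)
    (by rintro ⟨k, hk⟩; have : k < 2 := by nlinarith
        interval_cases k <;> omega)
    (by rintro ⟨k, hk⟩; have : k < 3 := by nlinarith
        interval_cases k <;> omega) u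

theorem s_notMem_range_A : (s : K) ∉ (algebraMap A K).range := by
  rintro ⟨x, hx⟩
  exact t.hσ.notMem_range ⟨algebraMap A M x, by rw [← hx, IsScalarTower.algebraMap_apply A M K]⟩

theorem s_notMem_range_B : (s : K) ∉ (algebraMap B K).range := by
  rintro ⟨x, hx⟩
  exact t.hσ.notMem_range ⟨algebraMap B M x, by rw [← hx, IsScalarTower.algebraMap_apply B M K]⟩

theorem nonempty_ringHom_padic [Fact p.Prime] : Nonempty (A →+* ℚ_[p]) := by
  have hp2 : p ≠ 2 := by have := t.res.p_mod; omega
  obtain ⟨c, hc⟩ := Padic.exists_sq_eq_of_isSquare (p := p) hp2 (n := -2) (fun h0 => by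
    have : ((2 : ℕ) : ZMod p) = 0 := by
      push_cast at h0 ⊢
      exact neg_eq_zero.1 h0
    rw [ZMod.natCast_eq_zero_iff] at this
    exact hp2 ((Nat.prime_dvd_prime_iff_eq Fact.out Nat.prime_two).1 this))
    (by simpa using t.res.neg_two_p)
  exact t.hA.nonempty_ringHom (n := -2) (by simpa using t.coe_a_sq) hc

theorem norm_ne_neg_one (z : K) : Algebra.norm A z ≠ -1 := by
  intro h
  obtain ⟨x, y, hxy⟩ := exists_norm_eq_sq_sub (F := A) (d := (p : A))
    (by rw [map_natCast, t.coe_s_sq]) t.s_notMem_range_A z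
  have : Fact p.Prime := ⟨t.res.prime_p⟩
  obtain ⟨f⟩ := t.nonempty_ringHom_padic
  rw [h] at hxy
  have := congrArg f hxy
  simp only [map_neg, map_one, map_sub, map_mul, map_pow, map_natCast] at this
  refine one_ne_zero (Padic.eq_zero_of_sq_sub_eq (p := p) (n := -1) (x := f x) (y := f y) (z := 1)
    (by simpa using t.res.neg_one_p) ?_)
  push_cast
  linear_combination -this

theorem mul_apply_unit (u : (𝓞 M)ˣ) : (u : 𝓞 M) * intAut τ u = 1 ∨ (u : 𝓞 M) * intAut τ u = -1 := by
  rw [← t.hτ.algebraMap_intNorm]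
  rcases t.unit_A_eq (Units.map (Algebra.intNorm (𝓞 A) (𝓞 M)) u) with h | h
  · left
    have := congrArg (fun v : (𝓞 A)ˣ => (v : 𝓞 A)) h
    rw [show Algebra.intNorm (𝓞 A) (𝓞 M) (u : 𝓞 M) = 1 from this, map_one]
  · right
    have := congrArg (fun v : (𝓞 A)ˣ => (v : 𝓞 A)) h
    rw [show Algebra.intNorm (𝓞 A) (𝓞 M) (u : 𝓞 M) = -1 from this, map_neg, map_one]

theorem mul_apply_eq_one (α : K) (u : (𝓞 M)ˣ) (h : α * σ α = algebraMap M K (u : 𝓞 M)) :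
    (u : 𝓞 M) * intAut τ u = 1 := by
  refine (t.mul_apply_unit u).resolve_right fun h1 => ?_
  have hu : Algebra.norm M α = ((u : 𝓞 M) : M) :=
    (algebraMap M K).injective (by rw [t.hσ.algebraMap_norm, h])
  have hn : Algebra.norm A ((u : 𝓞 M) : M) = -1 := by
    apply (algebraMap A M).injective
    rw [t.hτ.algebraMap_norm, map_neg, map_one]
    have := congrArg (algebraMap (𝓞 M) M) h1
    simpa only [map_mul, coe_intAut, map_neg, map_one] using this
  rw [← hu, Algebra.norm_norm] at hn
  exact t.norm_ne_neg_one α hn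

theorem exists_unit_norm (α : K) (u : (𝓞 M)ˣ) (h : α * σ α = algebraMap M K (u : 𝓞 M)) :
    ∃ e : (𝓞 K)ˣ, ((e : 𝓞 K) : K) * σ (e : 𝓞 K) = algebraMap M K (u : 𝓞 M) := by
  have hu := t.mul_apply_eq_one α u h
  obtain ⟨γ, hγ0, hγ⟩ := t.hτ.exists_eq_div (α := ((u : 𝓞 M) : M)) (by
    have := congrArg (algebraMap (𝓞 M) M) hu
    simpa only [map_mul, coe_intAut, map_one] using this)
  obtain ⟨x, c, hc, rfl⟩ := IsFractionRing.div_surjective (A := 𝓞 M) γ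
  have hc0 : c ≠ 0 := nonZeroDivisors.ne_zero hc
  have hcM : (c : M) ≠ 0 := by simpa using hc0
  have hτc : τ (c : M) ≠ 0 := by simpa using hc0
  set v : 𝓞 M := x * intAut τ c with hv
  have hv0 : v ≠ 0 := by
    have : x ≠ 0 := by rintro rfl; simp at hγ0
    simp [hv, this, hc0]
  have key : u * intAut τ v = v := by
    apply RingOfIntegers.coe_injective
    simp only [map_mul, hv, t.hτ.intAut_intAut, coe_intAut]
    rw [map_div₀] at hγ
    field_simp at hγ
    linear_combination hγ
  obtain ⟨z, hz, hτz⟩ := t.hA.exists_span_of_map_eq t.coe_a_sq t.hτ t.coe_b_sq t.res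
    (I := Ideal.span {v}) (by simpa using hv0) (by
      rw [Ideal.map_span, Set.image_singleton, Ideal.span_singleton_eq_span_singleton]
      exact ⟨u, by rw [mul_comm, key]⟩)
  rw [Ideal.span_singleton_eq_span_singleton] at hz
  obtain ⟨w, hw⟩ := hz.symm
  have hz0 : z ≠ 0 := by rintro rfl; rw [zero_mul] at hw; exact hv0 hw.symm
  have huw : (u : 𝓞 M) = w ^ 2 ∨ (u : 𝓞 M) = -w ^ 2 := by
    rw [← hw, map_mul] at key
    have hww := t.mul_apply_unit w
    have h1 : (u : 𝓞 M) * intAut τ w = w ∨ (u : 𝓞 M) * intAut τ w = -w := by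
      rcases hτz with h' | h' <;> rw [h'] at key
      · exact Or.inl (mul_left_cancel₀ hz0 (by linear_combination key))
      · exact Or.inr (mul_left_cancel₀ hz0 (by linear_combination -key))
    rcases h1 with h1 | h1 <;> rcases hww with h2 | h2
    · left; linear_combination (w : 𝓞 M) * h1 - u * h2
    · right; linear_combination -(w : 𝓞 M) * h1 + u * h2
    · right; linear_combination (w : 𝓞 M) * h1 - u * h2
    · left; linear_combination -(w : 𝓞 M) * h1 + u * h2
  rcases huw with huw | huw
  · refine ⟨Units.map (algebraMap (𝓞 M) (𝓞 K)) w, ?_⟩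
    have h1 : (((algebraMap (𝓞 M) (𝓞 K)) (w : 𝓞 M) : 𝓞 K) : K) = algebraMap M K (w : 𝓞 M) := rfl
    simp only [Units.coe_map, MonoidHom.coe_coe, h1, σ.commutes, huw, map_pow]
    ring
  · obtain ⟨x, y, hxy⟩ := t.res.exists_mul_sub_two_mul
    have hxyK : (q : K) * (x : K) ^ 2 - 2 * p * (y : K) ^ 2 = 1 := by exact_mod_cast hxy
    set a' : 𝓞 K := algebraMap (𝓞 M) (𝓞 K) (algebraMap (𝓞 A) (𝓞 M) a) with ha'
    set b' : 𝓞 K := algebraMap (𝓞 M) (𝓞 K) (algebraMap (𝓞 B) (𝓞 M) b) with hb'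
    have ha2 : a' ^ 2 = -2 := by rw [ha', ← map_pow, ← map_pow, t.a_sq, map_neg, map_neg,
      map_ofNat, map_ofNat]
    have hb2 : b' ^ 2 = -(q : 𝓞 K) := by rw [hb', ← map_pow, ← map_pow, t.b_sq]; simp
    have hσa : intAut σ a' = a' := (intAut σ).commutes _
    have hσb : intAut σ b' = b' := (intAut σ).commutes _
    have hxy' : (q : 𝓞 K) * (x : 𝓞 K) ^ 2 - 2 * p * (y : 𝓞 K) ^ 2 = 1 := by exact_mod_cast hxy
    let θ : (𝓞 K)ˣ := ⟨x * b' + y * a' * s, -(x * b' - y * a' * s),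
      by linear_combination hxy' - x ^ 2 * hb2 + y ^ 2 * s ^ 2 * ha2 - 2 * y ^ 2 * t.s_sq,
      by linear_combination hxy' - x ^ 2 * hb2 + y ^ 2 * s ^ 2 * ha2 - 2 * y ^ 2 * t.s_sq⟩
    have hθ : (θ : 𝓞 K) * intAut σ θ = -1 := by
      simp only [θ, map_add, map_mul, map_intCast, hσa, hσb, t.intAut_s]
      linear_combination -hxy' + x ^ 2 * hb2 - y ^ 2 * s ^ 2 * ha2 + 2 * y ^ 2 * t.s_sq
    have hθ' : ((θ : 𝓞 K) : K) * σ (θ : 𝓞 K) = -1 := by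
      have := congrArg (algebraMap (𝓞 K) K) hθ
      simpa only [map_mul, coe_intAut, map_neg, map_one] using this
    refine ⟨Units.map (algebraMap (𝓞 M) (𝓞 K)) w * θ, ?_⟩
    have h1 : (((algebraMap (𝓞 M) (𝓞 K)) (w : 𝓞 M) : 𝓞 K) : K) = algebraMap M K (w : 𝓞 M) := rfl
    simp only [Units.coe_map, MonoidHom.coe_coe, h1, σ.commutes, huw, map_pow, Units.val_mul,
      map_mul, map_neg]
    linear_combination (algebraMap M K (w : 𝓞 M)) ^ 2 * hθ'

end Tower

end TowerData

section Splitting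

theorem Int.odd_of_sq_sub_mul_sq {p : ℕ} (hp : Odd p) {x y : ℤ} (h : x ^ 2 - p * y ^ 2 = -2) :
    Odd x ∧ Odd y := by
  have hp' : Odd (p : ℤ) := by exact_mod_cast hp
  have hxy : Odd x ↔ Odd y := by
    have h2 : Even (x ^ 2 - p * y ^ 2) := by rw [h]; exact ⟨-1, rfl⟩
    rw [Int.even_sub, ← Int.not_odd_iff_even, ← Int.not_odd_iff_even, not_iff_not, Int.odd_mul,
      Int.odd_pow' two_ne_zero, Int.odd_pow' two_ne_zero] at h2
    tauto
  by_contra hc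
  have hx : Even x := by rw [← Int.not_odd_iff_even]; tauto
  have hy : Even y := by rw [← Int.not_odd_iff_even]; tauto
  obtain ⟨m, rfl⟩ := hx
  obtain ⟨n, rfl⟩ := hy
  have : 4 * (m ^ 2 - p * n ^ 2) = -2 := by linear_combination h
  omega

variable {A : Type*} [Field A] [NumberField A]

/-- The prime `p` splits in `ℚ(√-2)`, compatibly with the square class of `x + √-2`. -/
theorem IsQuadGen.exists_factor {a : 𝓞 A} {ρ : A ≃ₐ[ℚ] A} (hA : IsQuadGen (a : A) ρ)
    (ha : a ^ 2 = -2) {p : ℕ} (hp : p.Prime) (hp2 : p ≠ 2) {x y : ℤ}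
    (h : x ^ 2 - p * y ^ 2 = -2) :
    ∃ π π' v : 𝓞 A, π * π' = p ∧ IsCoprime π π' ∧
      Ideal.absNorm (Ideal.span {π}) = Ideal.absNorm (Ideal.span {π'}) ∧
      x + a = π * v ^ 2 := by
  have haA : (a : A) ^ 2 = -2 := by
    have := congrArg (algebraMap (𝓞 A) A) ha
    simpa only [map_pow, map_neg, map_ofNat] using this
  have hpr (I : Ideal (𝓞 A)) : I.IsPrincipal := hA.isPrincipal_of_sq_eq_neg_two haA I
  have : IsPrincipalIdealRing (𝓞 A) := ⟨hpr⟩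
  obtain ⟨hx, hy⟩ := Int.odd_of_sq_sub_mul_sq (hp.odd_of_ne_two hp2) h
  have hp0 : (p : 𝓞 A) ≠ 0 := by exact_mod_cast hp.ne_zero
  have hρa : intAut ρ a = -a :=
    RingOfIntegers.coe_injective (by simp only [coe_intAut, hA.neg, map_neg])
  have hA' : (x : 𝓞 A) ^ 2 - p * (y : 𝓞 A) ^ 2 = -2 := by exact_mod_cast congrArg (Int.cast) h
  have hmul : ((x : 𝓞 A) + a) * (x - a) = p * y ^ 2 := by linear_combination hA' - ha
  have hcop : IsCoprime (2 * x) ((p : ℤ) * y ^ 2) := by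
    rw [show (p : ℤ) * y ^ 2 = 2 + x * x by linear_combination -h]
    refine IsCoprime.mul_left ?_ ?_
    · exact Int.isCoprime_two_left.2 (even_two.add_odd (Int.odd_mul.2 ⟨hx, hx⟩))
    · exact (Int.isCoprime_two_left.2 hx).symm.add_mul_left_right x
  have hcop2 : ∃ m n : 𝓞 A, m * (2 * x) + n * (p * y ^ 2) = 1 := by
    obtain ⟨m, n, hmn⟩ := hcop
    exact ⟨m, n, by exact_mod_cast congrArg (Int.cast) hmn⟩
  obtain ⟨m, n, hmn⟩ := hcop2
  obtain ⟨π, hπ⟩ := hpr (Ideal.span {(x : 𝓞 A) + a, (p : 𝓞 A)})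
  rw [Ideal.submodule_span_eq] at hπ
  set π₁ := intAut ρ π with hπ₁
  have hπ' : Ideal.span {(x : 𝓞 A) - a, (p : 𝓞 A)} = Ideal.span {π₁} := by
    have := congrArg (Ideal.map (intAut ρ)) hπ
    rw [Ideal.map_span, Ideal.map_span, Set.image_singleton, Set.image_pair, map_add, hρa,
      map_intCast, map_natCast, ← sub_eq_add_neg] at this
    exact this
  have hprod : Ideal.span {π} * Ideal.span {π₁} = Ideal.span {(p : 𝓞 A)} := by
    rw [← hπ, ← hπ', Ideal.span_pair_mul_span_pair, hmul]
    apply le_antisymm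
    · rw [Ideal.span_le]
      rintro z (rfl | rfl | rfl | rfl)
      all_goals rw [SetLike.mem_coe, Ideal.mem_span_singleton]
      · exact dvd_mul_right _ _
      · exact dvd_mul_left _ _
      · exact dvd_mul_right _ _
      · exact dvd_mul_right _ _
    · rw [Ideal.span_singleton_le_iff_mem]
      have hz1 : (p : 𝓞 A) * y ^ 2 ∈ Ideal.span {(p : 𝓞 A) * (y : 𝓞 A) ^ 2, ((x : 𝓞 A) + a) * p,
        p * (x - a), (p : 𝓞 A) * p} := Ideal.subset_span (by simp)
      have hz2 : ((x : 𝓞 A) + a) * p ∈ Ideal.span {(p : 𝓞 A) * (y : 𝓞 A) ^ 2, ((x : 𝓞 A) + a) * p,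
        p * (x - a), (p : 𝓞 A) * p} := Ideal.subset_span (by simp)
      have hz3 : p * ((x : 𝓞 A) - a) ∈ Ideal.span {(p : 𝓞 A) * (y : 𝓞 A) ^ 2, ((x : 𝓞 A) + a) * p,
        p * (x - a), (p : 𝓞 A) * p} := Ideal.subset_span (by simp)
      have := add_mem (Ideal.mul_mem_left _ m (add_mem hz2 hz3)) (Ideal.mul_mem_left _ (n * p) hz1)
      convert this using 1
      linear_combination -(p : 𝓞 A) * hmn
  rw [Ideal.span_singleton_mul_span_singleton, Ideal.span_singleton_eq_span_singleton] at hprod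
  obtain ⟨u, hu⟩ := hprod
  have hπcop : IsCoprime π (π₁ * u) := by
    rw [← Ideal.isCoprime_span_singleton_iff, Ideal.span_singleton_mul_right_unit u.isUnit, ← hπ,
      ← hπ', Ideal.isCoprime_iff_exists]
    have hz1 : (x : 𝓞 A) + a ∈ Ideal.span {(x : 𝓞 A) + a, (p : 𝓞 A)} := Ideal.subset_span (by simp)
    have hz2 : (p : 𝓞 A) ∈ Ideal.span {(x : 𝓞 A) + a, (p : 𝓞 A)} := Ideal.subset_span (by simp)
    have hz3 : (x : 𝓞 A) - a ∈ Ideal.span {(x : 𝓞 A) - a, (p : 𝓞 A)} := Ideal.subset_span (by simp)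
    refine ⟨_, add_mem (Ideal.mul_mem_left _ m hz1) (Ideal.mul_mem_left _ (n * y ^ 2) hz2), _,
      Ideal.mul_mem_left _ m hz3, ?_⟩
    linear_combination hmn
  obtain ⟨w, hw⟩ : π ∣ (x : 𝓞 A) + a := by
    rw [← Ideal.mem_span_singleton, ← hπ]; exact Ideal.subset_span (by simp)
  obtain ⟨w', hw'⟩ : π₁ ∣ (x : 𝓞 A) - a := by
    rw [← Ideal.mem_span_singleton, ← hπ']; exact Ideal.subset_span (by simp)
  have hww : w * (w' * (u⁻¹ : (𝓞 A)ˣ)) = (y : 𝓞 A) ^ 2 := by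
    rw [hw, hw'] at hmul
    apply mul_left_cancel₀ hp0
    rw [← hmul, ← hu]
    linear_combination (π * w * π₁ * w') * u.mul_inv
  have hwcop : IsCoprime w (w' * (u⁻¹ : (𝓞 A)ˣ)) := by
    refine ⟨m * π + n * p * (w' * (u⁻¹ : (𝓞 A)ˣ)), m * π₁ * u, ?_⟩
    linear_combination hmn - m * hw - m * hw' + n * p * hww + m * π₁ * w' * u.mul_inv
  obtain ⟨v, hv⟩ := exists_associated_pow_of_mul_eq_pow' hwcop hww
  obtain ⟨u', hu'⟩ := hv
  refine ⟨π * u', (π₁ * u) * (u'⁻¹ : (𝓞 A)ˣ), v, ?_, ?_, ?_, ?_⟩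
  · linear_combination hu + π * π₁ * u * u'.mul_inv
  · exact (isCoprime_mul_unit_right_left u'.isUnit _ _).2
      ((isCoprime_mul_unit_right_right u'⁻¹.isUnit _ _).2 hπcop)
  · rw [Ideal.span_singleton_mul_right_unit u'.isUnit,
      Ideal.span_singleton_mul_right_unit u'⁻¹.isUnit, Ideal.span_singleton_mul_right_unit u.isUnit,
      ← IsQuadGen.absNorm_map_intAut ρ (Ideal.span {π}), Ideal.map_span, Set.image_singleton]
  · linear_combination hw - π * hu'

end Splitting

section Squares

section CommRing

variable {R : Type*} [CommRing R]

theorem Ideal.span_pair_sq_eq {π π' s : R} (hs : s ^ 2 = π * π') (h : IsCoprime π π') :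
    Ideal.span {π, s} ^ 2 = Ideal.span {π} := by
  obtain ⟨m, n, hmn⟩ := h
  rw [sq, Ideal.span_pair_mul_span_pair]
  apply le_antisymm
  · rw [Ideal.span_le]
    rintro z (rfl | rfl | rfl | rfl)
    all_goals rw [SetLike.mem_coe, Ideal.mem_span_singleton]
    · exact dvd_mul_right _ _
    · exact dvd_mul_right _ _
    · exact dvd_mul_left _ _
    · rw [← sq, hs]; exact dvd_mul_right _ _
  · rw [Ideal.span_singleton_le_iff_mem]
    have h1 : π * π ∈ Ideal.span {π * π, π * s, s * π, s * s} := Ideal.subset_span (by simp)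
    have h2 : s * s ∈ Ideal.span {π * π, π * s, s * π, s * s} := Ideal.subset_span (by simp)
    convert add_mem (Ideal.mul_mem_left _ m h1) (Ideal.mul_mem_left _ n h2) using 1
    linear_combination -π * hmn - n * hs

theorem Ideal.span_pair_mul_span_pair_eq {π π' s : R} (hs : s ^ 2 = π * π')
    (h : IsCoprime π π') : Ideal.span {π, s} * Ideal.span {π', s} = Ideal.span {s} := by
  obtain ⟨m, n, hmn⟩ := h
  rw [Ideal.span_pair_mul_span_pair]
  apply le_antisymm
  · rw [Ideal.span_le]
    rintro z (rfl | rfl | rfl | rfl)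
    all_goals rw [SetLike.mem_coe, Ideal.mem_span_singleton]
    · rw [← hs]; exact dvd_pow_self _ two_ne_zero
    · exact dvd_mul_left _ _
    · exact dvd_mul_right _ _
    · exact dvd_mul_right _ _
  · rw [Ideal.span_singleton_le_iff_mem]
    have h1 : π * s ∈ Ideal.span {π * π', π * s, s * π', s * s} := Ideal.subset_span (by simp)
    have h2 : s * π' ∈ Ideal.span {π * π', π * s, s * π', s * s} := Ideal.subset_span (by simp)
    convert add_mem (Ideal.mul_mem_left _ m h1) (Ideal.mul_mem_left _ n h2) using 1
    linear_combination -s * hmn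

end CommRing

variable {K : Type*} [Field K] [NumberField K]

theorem exists_unit_sq_eq {p : ℕ} {x y : ℤ} (h : x ^ 2 - p * y ^ 2 = -2) {a s : 𝓞 K}
    (ha : a ^ 2 = -2) (hs : s ^ 2 = p) :
    ∃ (e : (𝓞 K)ˣ) (g : 𝓞 K), g ^ 2 = a * (x + a) * e := by
  have ha0 : (a : K) ≠ 0 := by
    intro h0
    have h1 : a = 0 := RingOfIntegers.coe_injective (by simpa using h0)
    rw [h1] at ha
    norm_num at ha
  have haK : (a : K) ^ 2 = -2 := by
    have := congrArg (algebraMap (𝓞 K) K) ha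
    simpa only [map_pow, map_neg, map_ofNat] using this
  have hsK : (s : K) ^ 2 = p := by
    have := congrArg (algebraMap (𝓞 K) K) hs
    simpa only [map_pow, map_natCast] using this
  have hK : (x : K) ^ 2 - p * (y : K) ^ 2 = -2 := by exact_mod_cast congrArg (Int.cast) h
  have hO : (x : 𝓞 K) ^ 2 - p * (y : 𝓞 K) ^ 2 = -2 := by exact_mod_cast congrArg (Int.cast) h
  have key (y' : ℤ) (hy : (y' : K) ^ 2 = (y : K) ^ 2) :
      ∃ ψ : 𝓞 K, a * ψ = x + y' * s ∧ ψ ^ 2 = -(x ^ 2 + 1 + x * y' * s) := by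
    have h1 : ((x + y' * s : K) / a) ^ 2 = ((-(x ^ 2 + 1 + x * y' * s) : 𝓞 K) : K) := by
      simp only [map_neg, map_add, map_mul, map_pow, map_intCast, map_one]
      rw [div_pow, haK, div_eq_iff (by norm_num)]
      linear_combination -(1 : K) * hK + (y' : K) ^ 2 * hsK + (p : K) * hy
    have h2 : IsIntegral ℤ ((x + y' * s : K) / a) :=
      IsIntegral.of_pow two_pos (by rw [h1]; exact RingOfIntegers.isIntegral_coe _)
    obtain ⟨ψ, hψ⟩ : ∃ ψ : 𝓞 K, (ψ : K) = (x + y' * s : K) / a := ⟨⟨_, h2⟩, rfl⟩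
    refine ⟨ψ, RingOfIntegers.coe_injective ?_, RingOfIntegers.coe_injective ?_⟩
    · simp only [map_mul, map_add, map_intCast, hψ]
      field_simp
    · simp only [map_pow, hψ, h1]
  obtain ⟨ψ, hψ, hψ2⟩ := key y rfl
  obtain ⟨ψ', hψ', -⟩ := key (-y) (by push_cast; ring)
  push_cast at hψ'
  have h1 : ψ * ψ' = 1 := by
    have h3 : (-2 : 𝓞 K) ≠ 0 := by norm_num
    apply mul_left_cancel₀ h3
    rw [← ha]
    linear_combination a * ψ' * hψ + (x + y * s) * hψ' - (y : 𝓞 K) ^ 2 * hs + hO - ha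
  refine ⟨-Units.mkOfMulEqOne ψ ψ' h1, 1 + ψ, ?_⟩
  rw [Units.val_neg, Units.val_mkOfMulEqOne]
  linear_combination hψ2 + (x + a) * hψ - ψ * ha - a * hψ - (-ψ - ψ) * ha

/-- If `a (x + a)` is a square up to a unit, then `a` lies in the square of every prime
containing it. -/
theorem mem_sq_of_mem {P : Ideal (𝓞 K)} [P.IsPrime] {a g f : 𝓞 K} {e : (𝓞 K)ˣ}
    (hg : g ^ 2 = a * f * e) (hf : IsCoprime a f) (ha : a ∈ P) : a ∈ P ^ 2 := by
  have hgP : g ∈ P := by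
    apply Ideal.IsPrime.mem_of_pow_mem ‹_› 2
    rw [hg, mul_assoc]
    exact P.mul_mem_right _ ha
  have h1 : (f * e) * a ∈ P ^ 2 := by
    have := Ideal.pow_mem_pow hgP 2
    rw [hg] at this
    convert this using 1
    ring
  refine (Ideal.IsPrime.mul_mem_pow P h1).resolve_left fun h2 => ?_
  have h3 : f ∈ P := by
    have := P.mul_mem_right ((e⁻¹ : (𝓞 K)ˣ) : 𝓞 K) h2
    rwa [mul_assoc, e.mul_inv, mul_one] at this
  obtain ⟨m, n, hmn⟩ := hf
  exact Ideal.IsPrime.ne_top ‹_› ((Ideal.eq_top_iff_one _).2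
    (hmn ▸ add_mem (P.mul_mem_left m ha) (P.mul_mem_left n h3)))

theorem sq_mul_sq_eq_span {P Q : Ideal (𝓞 K)} [P.IsPrime] [Q.IsPrime] {a g f w : 𝓞 K}
    {e : (𝓞 K)ˣ} (hK : Module.finrank ℚ K = 8) (ha : a ^ 2 = -2)
    (hg : g ^ 2 = a * f * e) (hf : IsCoprime a f) (h2P : (2 : 𝓞 K) ∈ P) (h2Q : (2 : 𝓞 K) ∈ Q)
    (hP : w ∈ P) (hQ : 1 - w ∈ Q) :
    P ^ 2 * Q ^ 2 = Ideal.span {a} ∧ Ideal.absNorm P = 2 ∧ Ideal.absNorm Q = 2 := by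
  have ha0 : a ≠ 0 := by
    rintro rfl
    norm_num at ha
  have hcop : IsCoprime P Q := Ideal.isCoprime_iff_exists.2 ⟨w, hP, 1 - w, hQ, by ring⟩
  have mem {I : Ideal (𝓞 K)} [I.IsPrime] (h2 : (2 : 𝓞 K) ∈ I) : a ∈ I :=
    Ideal.IsPrime.mem_of_pow_mem ‹_› 2 (by rw [ha]; exact neg_mem h2)
  have hdvd : P ^ 2 * Q ^ 2 ∣ Ideal.span {a} := by
    apply (hcop.pow (m := 2) (n := 2)).mul_dvd
    · rw [Ideal.dvd_span_singleton]; exact mem_sq_of_mem hg hf (mem h2P)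
    · rw [Ideal.dvd_span_singleton]; exact mem_sq_of_mem hg hf (mem h2Q)
  have hN : Ideal.absNorm (Ideal.span {a}) = 2 ^ 4 :=
    absNorm_span_of_sq_eq hK (Or.inr (by exact_mod_cast ha))
  have hN' := map_dvd Ideal.absNorm hdvd
  rw [hN, map_mul, map_pow, map_pow, ← mul_pow, show 2 ^ 4 = (2 * 2) ^ 2 by norm_num,
    Nat.pow_dvd_pow_iff two_ne_zero] at hN'
  have hP1 : Ideal.absNorm P ≠ 1 := by
    rw [Ne, Ideal.absNorm_eq_one_iff]; exact Ideal.IsPrime.ne_top ‹_›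
  have hQ1 : Ideal.absNorm Q ≠ 1 := by
    rw [Ne, Ideal.absNorm_eq_one_iff]; exact Ideal.IsPrime.ne_top ‹_›
  obtain ⟨hP2, hQ2⟩ : Ideal.absNorm P = 2 ∧ Ideal.absNorm Q = 2 := by
    have h4 := Nat.le_of_dvd (by norm_num) hN'
    have hP0 : Ideal.absNorm P ≠ 0 := by rintro h; simp [h] at hN'
    have hQ0 : Ideal.absNorm Q ≠ 0 := by rintro h; simp [h] at hN'
    have hP4 : 2 ≤ Ideal.absNorm P := by omega
    have hQ4 : 2 ≤ Ideal.absNorm Q := by omega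
    constructor <;> nlinarith
  refine ⟨(Ideal.eq_of_le_of_absNorm_le (by simpa using ha0) (Ideal.le_of_dvd hdvd) ?_).symm,
    hP2, hQ2⟩
  rw [hN, map_mul, map_pow, map_pow, hP2, hQ2, ← pow_add]

end Squares

section TowerClasses

theorem exists_isMaximal_two_mem {F L : Type*} [Field F] [Field L] [NumberField F] [NumberField L]
    [Algebra F L] (τ : L ≃ₐ[F] L) {w c : 𝓞 L} (h : w * intAut τ w = 2 * c) :
    ∃ P : Ideal (𝓞 L), P.IsMaximal ∧ 2 ∈ P ∧ w ∈ P := by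
  have h1 : Ideal.span {2, w} ≠ ⊤ := by
    intro h1
    have h2 : Ideal.span {2, intAut τ w} = ⊤ := by
      have := congrArg (Ideal.map (intAut τ)) h1
      rwa [Ideal.map_span, Set.image_pair, map_ofNat, Ideal.map_top] at this
    have h3 : Ideal.span {2, w} * Ideal.span {2, intAut τ w} ≤ Ideal.span {2} := by
      rw [Ideal.span_pair_mul_span_pair, Ideal.span_le]
      rintro z (rfl | rfl | rfl | rfl)
      all_goals rw [SetLike.mem_coe, Ideal.mem_span_singleton]
      · exact dvd_mul_right _ _
      · exact dvd_mul_right _ _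
      · exact dvd_mul_left _ _
      · rw [h]; exact dvd_mul_right _ _
    rw [h1, h2, Ideal.top_mul, top_le_iff, ← Ideal.absNorm_eq_one_iff,
      ← Nat.cast_ofNat, Ideal.absNorm_span_natCast] at h3
    have h4 := Module.finrank_pos (R := ℤ) (M := 𝓞 L)
    exact absurd (Nat.pow_eq_one.1 h3) (by omega)
  obtain ⟨P, hP, hle⟩ := Ideal.exists_le_maximal _ h1
  exact ⟨P, hP, hle (Ideal.subset_span (by simp)), hle (Ideal.subset_span (by simp))⟩

variable {A B M K : Type*} [Field A] [Field B] [Field M] [Field K] [NumberField A] [NumberField B]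
  [NumberField M] [NumberField K] [Algebra A M] [Algebra B M] [Algebra M K] [Algebra A K]
  [Algebra B K] [IsScalarTower A M K] [IsScalarTower B M K]

namespace Tower

variable {p q : ℕ} {a : 𝓞 A} {b : 𝓞 B} {ω : 𝓞 M} {s : 𝓞 K} {ρ : A ≃ₐ[ℚ] A}
    {β : B ≃ₐ[ℚ] B} {κ : M ≃ₐ[B] M} {τ : M ≃ₐ[A] M} {σ : K ≃ₐ[M] K}
    (t : Tower p q a b ω s ρ β κ τ σ)

include t

theorem finrank_K : Module.finrank ℚ K = 8 := by
  have := Module.finrank_mul_finrank ℚ M K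
  rw [t.hA.finrank_rat_eq_four t.hτ, t.hσ.finrank_eq] at this
  exact this.symm

theorem intAut_ω : intAut τ ω = 1 - ω := by
  apply RingOfIntegers.coe_injective
  have h := congrArg (algebraMap (𝓞 M) M) t.two_mul_ω
  have hb : algebraMap (𝓞 M) M (algebraMap (𝓞 B) (𝓞 M) b) = algebraMap B M b := rfl
  simp only [map_mul, map_ofNat, map_add, map_one, hb] at h
  have h' := congrArg τ h
  simp only [map_mul, map_ofNat, map_add, map_one, t.hτ.neg] at h'
  simp only [coe_intAut, map_sub, map_one]
  linear_combination h' / 2 + h / 2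

theorem exists_ω_mul_eq : ∃ j : 𝓞 M, ω * (1 - ω) = 2 * j := by
  have h1 := t.two_mul_ω
  have h2 : (algebraMap (𝓞 B) (𝓞 M) b) ^ 2 = -(q : 𝓞 M) := by
    rw [← map_pow, t.b_sq, map_neg, map_natCast]
  have hq : q = 8 * (q / 8) + 7 := by have := t.res.q_mod; omega
  refine ⟨(q / 8 : ℕ) + 1, ?_⟩
  have h3 : (q : 𝓞 M) = 8 * (q / 8 : ℕ) + 7 := by exact_mod_cast congrArg (Nat.cast) hq
  apply mul_left_cancel₀ (show (4 : 𝓞 M) ≠ 0 by norm_num)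
  linear_combination (-2 * ω + 1 - algebraMap (𝓞 B) (𝓞 M) b) * h1 - h2 + h3

theorem exists_isMaximal {w : 𝓞 M} {j : 𝓞 M} (h : w * intAut τ w = 2 * j) :
    ∃ P : Ideal (𝓞 K), P.IsMaximal ∧ 2 ∈ P ∧ algebraMap (𝓞 M) (𝓞 K) w ∈ P := by
  obtain ⟨P, hP, h2, hw⟩ := exists_isMaximal_two_mem τ h
  obtain ⟨Q, hQ, hQP⟩ := Ideal.exists_maximal_ideal_liesOver_of_isIntegral (S := 𝓞 K) P
  refine ⟨Q, hQ, ?_, ?_⟩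
  · have := (Ideal.mem_of_liesOver Q P 2).1 h2
    rwa [map_ofNat] at this
  · exact (Ideal.mem_of_liesOver Q P w).1 hw

theorem exists_ramified : ∃ T P₁ : Ideal (𝓞 K), T ≠ ⊥ ∧ P₁ ≠ ⊥ ∧ Ideal.absNorm T = 2 ∧
    Ideal.absNorm P₁ = p ^ 2 ∧ (p : 𝓞 K) ∈ P₁ ∧ (P₁ ^ 2).IsPrincipal ∧
    (∃ J : Ideal (𝓞 M), J ≠ ⊥ ∧ T ^ 2 = J.map (algebraMap (𝓞 M) (𝓞 K))) ∧
    ∀ P : Ideal (𝓞 K), P.IsPrime → P ≠ ⊥ → (∀ z, z - intAut σ z ∈ P) →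
      P = T ∨ P = P₁ ∨ (P * P₁).IsPrincipal ∨ (P * (T * P₁)).IsPrincipal := by
  have hp := t.res.prime_p
  have hp2 : p ≠ 2 := by have := t.res.p_mod; omega
  have hK := t.finrank_K
  obtain ⟨x, y, hxy⟩ := t.res.exists_eq_neg_two
  obtain ⟨hx, -⟩ := Int.odd_of_sq_sub_mul_sq (hp.odd_of_ne_two hp2) hxy
  obtain ⟨π₀, π₀', v₀, hππ₀, hcop₀, hN₀, hv₀⟩ := t.hA.exists_factor t.a_sq hp hp2 hxy
  set f := algebraMap (𝓞 A) (𝓞 K) with hf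
  set a' := f a with ha'
  set π := f π₀ with hπ
  set π' := f π₀' with hπ'
  set v := f v₀ with hv
  set w := algebraMap (𝓞 M) (𝓞 K) ω with hw
  have ha : a' ^ 2 = -2 := by rw [ha', ← map_pow, t.a_sq, map_neg, map_ofNat]
  have hππ : π * π' = p := by rw [hπ, hπ', ← map_mul, hππ₀, map_natCast]
  have hs : s ^ 2 = π * π' := by rw [hππ, t.s_sq]
  have hcop : IsCoprime π π' := hcop₀.map f
  have hfac : (x : 𝓞 K) + a' = π * v ^ 2 := by
    rw [hπ, hv, ← map_pow, ← map_mul, ← hv₀, map_add, map_intCast]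
  have hN : Ideal.absNorm (Ideal.span {π}) = Ideal.absNorm (Ideal.span {π'}) := by
    have h1 := Ideal.absNorm_algebraMap (𝓞 A) (𝓞 K) (Ideal.span {π₀})
    have h2 := Ideal.absNorm_algebraMap (𝓞 A) (𝓞 K) (Ideal.span {π₀'})
    rw [Ideal.map_span, Set.image_singleton] at h1 h2
    rw [h1, h2, hN₀]
  set P₁ := Ideal.span {π, s} with hP₁
  set P₂ := Ideal.span {π', s} with hP₂
  have hsq₁ : P₁ ^ 2 = Ideal.span {π} := Ideal.span_pair_sq_eq hs hcop
  have hsq₂ : P₂ ^ 2 = Ideal.span {π'} := Ideal.span_pair_sq_eq (hs.trans (mul_comm _ _)) hcop.symm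
  have hmul : P₁ * P₂ = Ideal.span {s} := Ideal.span_pair_mul_span_pair_eq hs hcop
  have hNs : Ideal.absNorm (Ideal.span {s}) = p ^ 4 := absNorm_span_of_sq_eq hK (Or.inl t.s_sq)
  have hN12 : Ideal.absNorm P₁ = Ideal.absNorm P₂ := by
    apply Nat.pow_left_injective two_ne_zero
    simp only
    rw [← map_pow, ← map_pow, hsq₁, hsq₂, hN]
  have hNP₁ : Ideal.absNorm P₁ = p ^ 2 := by
    apply Nat.pow_left_injective two_ne_zero
    simp only
    rw [← pow_mul, ← hNs, ← hmul, map_mul, ← hN12, sq]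
  have hNP₂ : Ideal.absNorm P₂ = p ^ 2 := hN12 ▸ hNP₁
  have hp0 : (p : 𝓞 K) ≠ 0 := by exact_mod_cast hp.ne_zero
  have hpP₁ : (p : 𝓞 K) ∈ P₁ := by
    rw [← hππ]; exact Ideal.mul_mem_right _ _ (Ideal.subset_span (by simp))
  have hP₁0 : P₁ ≠ ⊥ := fun h => hp0 (by rwa [h, Ideal.mem_bot] at hpP₁)
  have hP₂0 : P₂ ≠ ⊥ := by
    intro h
    rw [← Ideal.absNorm_eq_zero_iff, hNP₂] at h
    exact hp.ne_zero (by simpa using h)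
  obtain ⟨e, g, hg⟩ := exists_unit_sq_eq hxy ha t.s_sq
  have hax : IsCoprime a' (x + a') := by
    obtain ⟨n, hn⟩ := hx
    refine ⟨a' * n - 1, 1, ?_⟩
    have : (x : 𝓞 K) = 2 * n + 1 := by exact_mod_cast congrArg (Int.cast) hn
    linear_combination (n : 𝓞 K) * ha + this
  obtain ⟨j, hj⟩ := t.exists_ω_mul_eq
  have hωω : ω * intAut τ ω = 2 * j := by rw [t.intAut_ω, hj]
  obtain ⟨T, hT, h2T, hwT⟩ := t.exists_isMaximal hωω
  obtain ⟨T', hT', h2T', hwT'⟩ := t.exists_isMaximal (w := 1 - ω) (j := j) (by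
    rw [map_sub, map_one, t.intAut_ω, ← hj]; ring)
  rw [map_sub, map_one] at hwT'
  have hTp := hT.isPrime
  have hTp' := hT'.isPrime
  obtain ⟨hTT, hNT, hNT'⟩ := sq_mul_sq_eq_span hK ha hg hax h2T h2T' hwT hwT'
  have hT0 : T ≠ ⊥ := by rintro rfl; simp at hNT
  have hT0' : T' ≠ ⊥ := by rintro rfl; simp at hNT'
  have uniq (P : Ideal (𝓞 K)) (hP : P.IsPrime) (h2 : 2 ∈ P) (hwP : w ∈ P) : P = T := by
    have h1 := (sq_mul_sq_eq_span hK ha hg hax h2 h2T' hwP hwT').1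
    rw [← hTT] at h1
    exact pow_left_injective two_ne_zero (mul_right_cancel₀ (pow_ne_zero 2 hT0') h1)
  have uniq' (P : Ideal (𝓞 K)) (hP : P.IsPrime) (h2 : 2 ∈ P) (hwP : 1 - w ∈ P) : P = T' := by
    have h1 := (sq_mul_sq_eq_span hK ha hg hax h2T h2 hwT hwP).1
    rw [← hTT] at h1
    exact pow_left_injective two_ne_zero (mul_left_cancel₀ (pow_ne_zero 2 hT0) h1)
  have hv0 : v ≠ 0 := by
    intro h
    rw [h, sq, zero_mul, mul_zero] at hfac
    have h1 : (x : 𝓞 K) ^ 2 = ((-2 : ℤ) : 𝓞 K) := by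
      push_cast
      linear_combination (x - a') * hfac + ha
    have h2 : x ^ 2 = -2 := by exact_mod_cast h1
    nlinarith
  have hγ : Ideal.span {v} * (T' * (T * P₁)) = Ideal.span {g} := by
    apply pow_left_injective two_ne_zero
    simp only
    rw [mul_pow, mul_pow, mul_pow, hsq₁, Ideal.span_singleton_pow, Ideal.span_singleton_pow, hg,
      hfac, Ideal.span_singleton_mul_right_unit e.isUnit, ← Ideal.span_singleton_mul_span_singleton,
      ← Ideal.span_singleton_mul_span_singleton, ← hTT]
    ring
  refine ⟨T, P₁, hT0, hP₁0, hNT, hNP₁, hpP₁, ⟨π, hsq₁⟩, ⟨Ideal.relNorm (𝓞 M) T, ?_, ?_⟩, ?_⟩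
  · rwa [Ne, Ideal.relNorm_eq_bot_iff]
  · rw [t.hσ.map_relNorm, sq]
    congr 1
    refine (uniq _ (Ideal.map_isPrime_of_equiv (intAut σ)) ?_ ?_).symm
    · have := Ideal.mem_map_of_mem (intAut σ) h2T
      rwa [map_ofNat] at this
    · have := Ideal.mem_map_of_mem (intAut σ) hwT
      rwa [AlgEquiv.commutes] at this
  · intro P hP hP0 hram
    have h2s : 2 * s ∈ P := by
      have := hram s
      rw [t.intAut_s] at this
      convert this using 1
      ring
    rcases hP.mem_or_mem h2s with h2 | hsP
    · have h3 : w * (1 - w) ∈ P := by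
        rw [hw, ← map_one (algebraMap (𝓞 M) (𝓞 K)), ← map_sub, ← map_mul, hj, map_mul, map_ofNat]
        exact P.mul_mem_right _ h2
      rcases hP.mem_or_mem h3 with h4 | h4
      · exact Or.inl (uniq P hP h2 h4)
      · refine Or.inr (Or.inr (Or.inr ?_))
        rw [uniq' P hP h2 h4]
        obtain ⟨c, -, hc⟩ := Ideal.isPrincipal_of_span_mul_isPrincipal hv0 hγ
        exact ⟨c, hc⟩
    · have hpP : (p : 𝓞 K) ∈ P := by rw [← t.s_sq, sq]; exact P.mul_mem_right _ hsP
      have hle : p ^ 2 ≤ Ideal.absNorm P :=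
        sq_le_absNorm_of_not_isSquare (z := algebraMap (𝓞 B) (𝓞 K) b) (n := -q) hP.ne_top hp hpP
          (by rw [← map_pow, t.b_sq]; simp) (by simpa using t.res.neg_q_p)
      rw [← hππ] at hpP
      rcases hP.mem_or_mem hpP with h | h
      · refine Or.inr (Or.inl (Ideal.eq_of_le_of_absNorm_le hP₁0 ?_ (hNP₁.trans_le hle)).symm)
        rw [hP₁, Ideal.span_le]
        rintro _ (rfl | rfl) <;> assumption
      · have : P₂ = P := by
          refine Ideal.eq_of_le_of_absNorm_le hP₂0 ?_ (hNP₂.trans_le hle)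
          rw [hP₂, Ideal.span_le]
          rintro _ (rfl | rfl) <;> assumption
        refine Or.inr (Or.inr (Or.inl ⟨s, ?_⟩))
        rw [← this, mul_comm, hmul]

end Tower

end TowerClasses

section TwoTorsion

open scoped nonZeroDivisors

theorem zpow_eq_one_or_self {G : Type*} [Group G] {g : G} (hg : g ^ 2 = 1) (n : ℤ) :
    g ^ n = 1 ∨ g ^ n = g := by
  have hg' : g ^ (2 : ℤ) = 1 := by exact_mod_cast hg
  rcases Int.even_or_odd' n with ⟨k, rfl | rfl⟩
  · left; rw [zpow_mul, hg', one_zpow]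
  · right; rw [zpow_add, zpow_mul, hg', one_zpow, one_mul, zpow_one]

theorem ClassGroup.mk0_pow_eq_one_iff {R : Type*} [CommRing R] [IsDedekindDomain R]
    (I : (Ideal R)⁰) (n : ℕ) :
    ClassGroup.mk0 I ^ n = 1 ↔ ((I : Ideal R) ^ n).IsPrincipal := by
  rw [← map_pow, ← SubmonoidClass.coe_pow]
  exact ClassGroup.mk0_eq_one_iff (I ^ n).2

theorem ClassGroup.mk0_mul_eq_one_iff {R : Type*} [CommRing R] [IsDedekindDomain R]
    (I J : (Ideal R)⁰) :
    ClassGroup.mk0 I * ClassGroup.mk0 J = 1 ↔ ((I : Ideal R) * (J : Ideal R)).IsPrincipal := by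
  rw [← map_mul, ← Submonoid.coe_mul]
  exact ClassGroup.mk0_eq_one_iff (I * J).2

/-- If the ambiguous ideals are generated by ideals with explicit classes, so is the 2-torsion of
the class group. -/
theorem IsQuadGen.eq_of_sq_eq_one {F L : Type*} [Field F] [Field L] [NumberField F] [NumberField L]
    [Algebra F L] {s : L} {σ : L ≃ₐ[F] L} (hσ : IsQuadGen s σ)
    (hodd : Odd (Fintype.card (ClassGroup (𝓞 F))))
    (hpr : ∀ J : Ideal (𝓞 F), (J ^ 2).IsPrincipal → J.IsPrincipal)
    (hnorm : ∀ (α : L) (u : (𝓞 F)ˣ), α * σ α = algebraMap F L (u : 𝓞 F) →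
      ∃ e : (𝓞 L)ˣ, ((e : 𝓞 L) : L) * σ (e : 𝓞 L) = algebraMap F L (u : 𝓞 F))
    {T P₁ : (Ideal (𝓞 L))⁰} (hP₁ : ClassGroup.mk0 P₁ ^ 2 = 1)
    (hT : (ClassGroup.mk0 T ^ Fintype.card (ClassGroup (𝓞 F))) ^ 2 = 1)
    (hram : ∀ P : Ideal (𝓞 L), P.IsPrime → P ≠ ⊥ → (∀ z, z - intAut σ z ∈ P) →
      P = T ∨ P = P₁ ∨ (P * P₁).IsPrincipal ∨ (P * (T * P₁)).IsPrincipal)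
    {c : ClassGroup (𝓞 L)} (hc : c ^ 2 = 1) :
    c = 1 ∨ c = ClassGroup.mk0 P₁ ∨ c = ClassGroup.mk0 T ^ Fintype.card (ClassGroup (𝓞 F)) ∨
      c = ClassGroup.mk0 P₁ * ClassGroup.mk0 T ^ Fintype.card (ClassGroup (𝓞 F)) := by
  set h := Fintype.card (ClassGroup (𝓞 F)) with hh
  set p₁ := ClassGroup.mk0 P₁ with hp₁
  set H := Subgroup.closure {p₁, ClassGroup.mk0 T ^ h} with hH
  have hpH : p₁ ∈ H := Subgroup.subset_closure (by simp)
  have htH : ClassGroup.mk0 T ^ h ∈ H := Subgroup.subset_closure (by simp)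
  let S : Submonoid (Ideal (𝓞 L)) :=
    ((H.toSubmonoid.comap (powMonoidHom h)).comap ClassGroup.mk0).map (Submonoid.subtype _)
  have memS (I : (Ideal (𝓞 L))⁰) (hI : ClassGroup.mk0 I ^ h ∈ H) : (I : Ideal (𝓞 L)) ∈ S :=
    ⟨I, hI, rfl⟩
  obtain ⟨I, rfl⟩ := ClassGroup.mk0_surjective c
  have hI0 : (I : Ideal (𝓞 L)) ≠ ⊥ := nonZeroDivisors.ne_zero I.2
  have hIsq : ((I : Ideal (𝓞 L)) ^ 2).IsPrincipal :=
    (ClassGroup.mk0_pow_eq_one_iff I 2).1 hc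
  obtain ⟨b, hb0, hb⟩ := hσ.exists_map_mul_eq hpr hnorm I hI0 hIsq
  have hbb : Ideal.span {b} ≠ ⊥ := by simpa using hb0
  have key : Ideal.span {b} * (I : Ideal (𝓞 L)) ∈ S := by
    refine hσ.mem_of_map_eq S ?_ ?_ _ (mul_ne_zero hbb hI0) hb
    · intro J hJ
      have hJ' : J.map (algebraMap (𝓞 F) (𝓞 L)) ≠ ⊥ := by
        rwa [Ne, Ideal.map_eq_bot_iff_of_injective (FaithfulSMul.algebraMap_injective _ _)]
      refine memS ⟨_, mem_nonZeroDivisors_of_ne_zero hJ'⟩ ?_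
      convert one_mem H
      rw [ClassGroup.mk0_pow_eq_one_iff]
      have h1 : ClassGroup.mk0 ⟨J, mem_nonZeroDivisors_of_ne_zero hJ⟩ ^ h = 1 := pow_card_eq_one
      rw [ClassGroup.mk0_pow_eq_one_iff] at h1
      obtain ⟨z, hz⟩ := h1
      refine ⟨algebraMap _ _ z, ?_⟩
      rw [Ideal.submodule_span_eq] at hz ⊢
      rw [← Ideal.map_pow, hz, Ideal.map_span, Set.image_singleton]
    · intro P hP hP0 _ hPr
      have hP' := mem_nonZeroDivisors_of_ne_zero hP0
      refine memS ⟨P, hP'⟩ ?_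
      rcases hram P hP hP0 hPr with h1 | h1 | h1 | h1
      · convert htH
      · have : (⟨P, hP'⟩ : (Ideal (𝓞 L))⁰) = P₁ := Subtype.ext h1
        rw [this]
        exact pow_mem hpH h
      · have h2 := (ClassGroup.mk0_mul_eq_one_iff ⟨P, hP'⟩ P₁).2 h1
        rw [mul_eq_one_iff_eq_inv] at h2
        rw [h2]
        exact pow_mem (inv_mem hpH) h
      · have h2 := (ClassGroup.mk0_mul_eq_one_iff ⟨P, hP'⟩ (T * P₁)).2 h1
        rw [map_mul, mul_eq_one_iff_eq_inv] at h2
        rw [h2, inv_pow, mul_pow]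
        exact inv_mem (mul_mem htH (pow_mem hpH h))
  obtain ⟨I', hI', hII'⟩ := key
  have hcc : ClassGroup.mk0 I' = ClassGroup.mk0 I := by
    have : I' = ⟨_, mem_nonZeroDivisors_of_ne_zero hbb⟩ * I := Subtype.ext hII'
    rw [this, map_mul, (ClassGroup.mk0_eq_one_iff _).2 ⟨b, rfl⟩, one_mul]
  have hch : ClassGroup.mk0 I ^ h = ClassGroup.mk0 I := by
    obtain ⟨k, hk⟩ := hodd
    rw [hk, pow_succ, pow_mul, hc, one_pow, one_mul]
  have hmem : ClassGroup.mk0 I' ^ h ∈ H := hI'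
  rw [hcc, hch, hH, Subgroup.mem_closure_pair] at hmem
  obtain ⟨m, n, hmn⟩ := hmem
  rw [← hmn]
  rcases zpow_eq_one_or_self hP₁ m with h1 | h1 <;> rcases zpow_eq_one_or_self hT n with h2 | h2 <;>
    rw [h1, h2] <;> simp

end TwoTorsion

section TowerGroup

open scoped nonZeroDivisors

variable {A B M K : Type*} [Field A] [Field B] [Field M] [Field K] [NumberField A] [NumberField B]
  [NumberField M] [NumberField K] [Algebra A M] [Algebra B M] [Algebra M K] [Algebra A K]
  [Algebra B K] [IsScalarTower A M K] [IsScalarTower B M K]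

namespace Tower

variable {p q : ℕ} {a : 𝓞 A} {b : 𝓞 B} {ω : 𝓞 M} {s : 𝓞 K} {ρ : A ≃ₐ[ℚ] A}
    {β : B ≃ₐ[ℚ] B} {κ : M ≃ₐ[B] M} {τ : M ≃ₐ[A] M} {σ : K ≃ₐ[M] K}
    (t : Tower p q a b ω s ρ β κ τ σ)

include t

theorem coe_a_sq_K : (algebraMap A K a) ^ 2 = -2 := by
  rw [← map_pow, t.coe_a_sq, map_neg, map_ofNat]

theorem a_notMem_range_rat : algebraMap A K a ∉ (algebraMap ℚ K).range := by
  rintro ⟨x, hx⟩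
  refine t.hA.notMem_range ⟨x, (algebraMap A K).injective ?_⟩
  rw [← hx, ← IsScalarTower.algebraMap_apply]

theorem a_notMem_range_B : algebraMap A K a ∉ (algebraMap B K).range := by
  rintro ⟨x, hx⟩
  refine t.hκ.notMem_range ⟨x, (algebraMap M K).injective ?_⟩
  rw [← IsScalarTower.algebraMap_apply, ← IsScalarTower.algebraMap_apply, hx]

theorem s_notMem_range_rat : (s : K) ∉ (algebraMap ℚ K).range := by
  rintro ⟨x, hx⟩
  exact t.s_notMem_range_A ⟨algebraMap ℚ A x, by rw [← hx, ← IsScalarTower.algebraMap_apply]⟩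

theorem not_isPrincipal_of_absNorm_eq {I : Ideal (𝓞 K)} {n : ℕ} (hn : n ≠ 0)
    (hI : Ideal.absNorm I = 2 * n ^ 2) : ¬ I.IsPrincipal := by
  rintro ⟨α, rfl⟩
  have : Fact p.Prime := ⟨t.res.prime_p⟩
  rw [Ideal.submodule_span_eq, Ideal.absNorm_span_singleton] at hI
  obtain ⟨x, y, hxy⟩ := exists_norm_eq_sq_sub (d := (-2 : ℚ)) (s := algebraMap A K a)
    (by rw [t.coe_a_sq_K]; simp) t.a_notMem_range_rat (α : K)
  obtain ⟨z, w, hzw⟩ := exists_norm_eq_sq_sub (d := (p : ℚ)) (s := (s : K))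
    (by rw [t.coe_s_sq]; simp) t.s_notMem_range_rat (α : K)
  have h0 : 0 ≤ Algebra.norm ℤ α := by
    have : (0 : ℚ) ≤ (Algebra.norm ℤ α : ℤ) := by
      rw [Algebra.coe_norm_int, hxy]
      nlinarith [sq_nonneg x, sq_nonneg y]
    exact_mod_cast this
  have h1 : Algebra.norm ℤ α = 2 * n ^ 2 := by
    rw [← Int.natAbs_of_nonneg h0, hI]; push_cast; ring
  have h2 : z ^ 2 - p * w ^ 2 = 2 * (n : ℚ) ^ 2 := by
    rw [← hzw, ← Algebra.coe_norm_int, h1]; push_cast; ring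
  have h3 : (z : ℚ_[p]) ^ 2 - (2 : ℤ) * (n : ℚ_[p]) ^ 2 = p * (w : ℚ_[p]) ^ 2 := by
    have := congrArg (algebraMap ℚ ℚ_[p]) h2
    simp only [map_sub, map_mul, map_pow, map_natCast, map_ofNat, eq_ratCast] at this
    push_cast
    linear_combination this
  have h4 := Padic.eq_zero_of_sq_sub_eq (by simpa using t.res.two_p) h3
  exact hn (by exact_mod_cast h4)

theorem unit_B_eq (u : (𝓞 B)ˣ) : u = 1 ∨ u = -1 := by
  have hq := t.res.q_mod
  have hb : (b : B) ^ 2 = -(q : B) := by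
    have := congrArg (algebraMap (𝓞 B) B) t.b_sq
    simpa only [map_pow, map_neg, map_natCast] using this
  refine t.hB.unit_eq_one_or hb ?_ ?_ u
  · rintro ⟨k, hk⟩
    have h1 := congrArg (· % 8) hk
    simp only [Nat.mul_mod k k, hq] at h1
    have : k % 8 < 8 := Nat.mod_lt _ (by norm_num)
    interval_cases k % 8 <;> omega
  · rintro ⟨k, hk⟩
    have h1 := congrArg (· % 8) hk
    simp only [Nat.mul_mod k k, Nat.mul_mod 3 q, hq] at h1
    have : k % 8 < 8 := Nat.mod_lt _ (by norm_num)
    interval_cases k % 8 <;> omega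

/-- A norm from `K` to `B` is never `±p` times a square. -/
theorem norm_ne_mul_sq (α : K) {e : B} (he : e ≠ 0) :
    Algebra.norm B α ≠ p * e ^ 2 ∧ Algebra.norm B α ≠ -(p * e ^ 2) := by
  obtain ⟨x, y, hxy⟩ := exists_norm_eq_sq_sub (d := (-2 : B)) (s := algebraMap A K a)
    (by rw [t.coe_a_sq_K, map_neg, map_ofNat]) t.a_notMem_range_B α
  obtain ⟨z, w, hzw⟩ := exists_norm_eq_sq_sub (d := (p : B)) (s := (s : K))
    (by rw [t.coe_s_sq]; simp) t.s_notMem_range_B α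
  have hb : (b : B) ^ 2 = ((-q : ℤ) : B) := by
    have := congrArg (algebraMap (𝓞 B) B) t.b_sq
    simpa only [map_pow, map_neg, map_natCast, Int.cast_neg, Int.cast_natCast] using this
  obtain ⟨c, hc⟩ := Padic.exists_sq_eq_of_mod_eight (n := -(q : ℤ))
    (by have := t.res.q_mod; omega)
  obtain ⟨f⟩ := t.hB.nonempty_ringHom hb hc
  have he' : f e ≠ 0 := by simpa using he
  constructor <;> intro h
  · have h1 := congrArg f (hzw.symm.trans h)
    simp only [map_sub, map_mul, map_pow, map_natCast] at h1
    apply Padic.not_sq_eq_mul t.res.p_mod (f z / f e) (f w / f e)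
    field_simp
    linear_combination h1
  · have h1 := congrArg f (hxy.symm.trans h)
    simp only [map_sub, map_mul, map_pow, map_natCast, map_neg, map_ofNat] at h1
    apply Padic.not_add_two_mul_sq t.res.p_mod (f x / f e) (f y / f e)
    field_simp
    linear_combination h1

theorem relNorm_eq_span {P : Ideal (𝓞 K)} (hP : Ideal.absNorm P = p ^ 2) (hpP : (p : 𝓞 K) ∈ P) :
    Ideal.relNorm (𝓞 B) P = Ideal.span {(p : 𝓞 B)} := by
  have hp := t.res.prime_p
  have hN : Ideal.absNorm (Ideal.span {(p : 𝓞 B)}) = p ^ 2 := by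
    rw [Ideal.absNorm_span_natCast, RingOfIntegers.rank, t.hB.finrank_eq]
  have hpt : P ≠ ⊤ := by
    rw [Ne, ← Ideal.absNorm_eq_one_iff, hP]
    have := Nat.one_lt_pow two_ne_zero hp.one_lt
    omega
  have h1 : Ideal.span {(p : 𝓞 B)} = P.comap (algebraMap (𝓞 B) (𝓞 K)) := by
    refine Ideal.eq_of_le_of_absNorm_le (by simpa using hp.ne_zero) ?_ ?_
    · rw [Ideal.span_singleton_le_iff_mem, Ideal.mem_comap, map_natCast]
      exact hpP
    · rw [hN]
      exact sq_le_absNorm_of_not_isSquare (z := b) (n := -q) (Ideal.comap_ne_top _ hpt) hp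
        (by rw [Ideal.mem_comap, map_natCast]; exact hpP) (by rw [t.b_sq]; simp)
        (by simpa using t.res.neg_q_p)
  have hN' : Ideal.absNorm (Ideal.relNorm (𝓞 B) P) = p ^ 2 := by rw [Ideal.absNorm_relNorm, hP]
  refine Ideal.eq_of_le_of_absNorm_le ?_ ?_ (by rw [hN, hN'])
  · rw [Ne, ← Ideal.absNorm_eq_zero_iff, hN']
    exact pow_ne_zero 2 hp.ne_zero
  · rw [h1]
    exact Ideal.relNorm_le_comap _ _

theorem not_isPrincipal_mul_sq {P J : Ideal (𝓞 K)} (hJ : J ≠ ⊥) (hP : Ideal.absNorm P = p ^ 2)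
    (hpP : (p : 𝓞 K) ∈ P) : ¬ (P * J ^ 2).IsPrincipal := by
  rintro ⟨α, hα⟩
  rw [Ideal.submodule_span_eq] at hα
  set h := Fintype.card (ClassGroup (𝓞 M)) with hh
  obtain ⟨k, hk⟩ := t.odd_card_classGroup
  have hJM : Ideal.relNorm (𝓞 M) J ≠ ⊥ := by rwa [Ne, Ideal.relNorm_eq_bot_iff]
  have h1 : ClassGroup.mk0 ⟨_, mem_nonZeroDivisors_of_ne_zero hJM⟩ ^ h = 1 := pow_card_eq_one
  rw [ClassGroup.mk0_pow_eq_one_iff] at h1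
  obtain ⟨c, hc⟩ := h1
  rw [Ideal.submodule_span_eq] at hc
  set d := Algebra.intNorm (𝓞 B) (𝓞 M) c with hd
  have hJB : Ideal.relNorm (𝓞 B) J ^ h = Ideal.span {d} := by
    rw [← Ideal.relNorm_relNorm (𝓞 B) (𝓞 M), ← map_pow, hc, Ideal.relNorm_singleton]
  set γ := Algebra.intNorm (𝓞 B) (𝓞 K) α with hγ
  have hγJ : Ideal.span {γ} = Ideal.span {(p : 𝓞 B)} * Ideal.relNorm (𝓞 B) J ^ 2 := by
    rw [← Ideal.relNorm_singleton, ← hα, map_mul, map_pow, t.relNorm_eq_span hP hpP]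
  have hp0 : (p : 𝓞 B) ≠ 0 := by exact_mod_cast t.res.prime_p.ne_zero
  have hJ0 : Ideal.relNorm (𝓞 B) J ≠ 0 := by
    rwa [Ideal.zero_eq_bot, Ne, Ideal.relNorm_eq_bot_iff]
  have hd0 : d ≠ 0 := by
    intro h0
    apply pow_ne_zero h hJ0
    rw [hJB, h0, Ideal.span_singleton_zero, Ideal.zero_eq_bot]
  have hγ0 : γ ≠ 0 := by
    intro h0
    rw [h0, Ideal.span_singleton_zero] at hγJ
    exact mul_ne_zero (by simpa using hp0) (pow_ne_zero 2 hJ0) hγJ.symm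
  have h2 : Ideal.span {(p : 𝓞 B) ^ h * d ^ 2} = Ideal.span {γ ^ h} := by
    rw [← Ideal.span_singleton_pow, hγJ, mul_pow, Ideal.span_singleton_pow, pow_right_comm, hJB,
      Ideal.span_singleton_pow, Ideal.span_singleton_mul_span_singleton]
  rw [Ideal.span_singleton_eq_span_singleton] at h2
  obtain ⟨u, hu⟩ := h2
  have hγ' : ((γ : 𝓞 B) : B) = Algebra.norm B (α : K) := Algebra.algebraMap_intNorm _
  have hγB : (γ : B) ≠ 0 := by simpa using hγ0
  have hdB : (d : B) ≠ 0 := by simpa using hd0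
  have hpB : (p : B) ≠ 0 := by exact_mod_cast t.res.prime_p.ne_zero
  set e : B := p ^ k * d / γ ^ k with he
  have he0 : e ≠ 0 := div_ne_zero (mul_ne_zero (pow_ne_zero k hpB) hdB) (pow_ne_zero k hγB)
  have hγe : (γ : B) = p * e ^ 2 * (u : 𝓞 B) := by
    have h3 := congrArg (algebraMap (𝓞 B) B) hu
    simp only [map_mul, map_pow, map_natCast] at h3
    rw [hh, hk] at h3
    rw [he, div_pow, mul_div_assoc', div_mul_eq_mul_div,
    eq_div_iff (pow_ne_zero 2 (pow_ne_zero k hγB))]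
    linear_combination -h3
  rw [hγ'] at hγe
  rcases t.unit_B_eq u with rfl | rfl
  · exact (t.norm_ne_mul_sq (α : K) he0).1 (by rw [hγe]; simp)
  · exact (t.norm_ne_mul_sq (α : K) he0).2 (by rw [hγe]; simp)

/-- The 2-class group of `K` is of type `(2, 2)`. -/
theorem nonempty_mulEquiv (P : Sylow 2 (ClassGroup (𝓞 K))) :
    Nonempty (↥(P : Subgroup (ClassGroup (𝓞 K))) ≃* Multiplicative (ZMod 2 × ZMod 2)) := by
  obtain ⟨T, P₁, hT0, hP0, hNT, hNP, hpP, hP2, ⟨J, hJ0, hJ⟩, hram⟩ := t.exists_ramified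
  set h := Fintype.card (ClassGroup (𝓞 M)) with hh
  set T' : (Ideal (𝓞 K))⁰ := ⟨T, mem_nonZeroDivisors_of_ne_zero hT0⟩ with hT'
  set P' : (Ideal (𝓞 K))⁰ := ⟨P₁, mem_nonZeroDivisors_of_ne_zero hP0⟩ with hP'
  have hP1 : ClassGroup.mk0 P' ^ 2 = 1 := (ClassGroup.mk0_pow_eq_one_iff P' 2).2 hP2
  have hT1 : (ClassGroup.mk0 T' ^ h) ^ 2 = 1 := by
    rw [← pow_mul, ClassGroup.mk0_pow_eq_one_iff, mul_comm, pow_mul]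
    have h1 : ClassGroup.mk0 ⟨J, mem_nonZeroDivisors_of_ne_zero hJ0⟩ ^ h = 1 := pow_card_eq_one
    rw [ClassGroup.mk0_pow_eq_one_iff] at h1
    obtain ⟨z, hz⟩ := h1
    refine ⟨algebraMap _ _ z, ?_⟩
    rw [Ideal.submodule_span_eq] at hz ⊢
    rw [hT', hJ, ← Ideal.map_pow, hz, Ideal.map_span, Set.image_singleton]
  have hinv (c : ClassGroup (𝓞 K)) : ∃ I : (Ideal (𝓞 K))⁰, ClassGroup.mk0 I = c⁻¹ :=
    ClassGroup.mk0_surjective c⁻¹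
  have hodd (i : ℕ) (c : ClassGroup (𝓞 K)) :
      c ^ 2 ≠ ClassGroup.mk0 P' ^ i * ClassGroup.mk0 T' ^ h := by
    intro hc
    obtain ⟨I, hI⟩ := hinv c
    have h1 : ClassGroup.mk0 (P' ^ i * T' ^ h) * ClassGroup.mk0 (I ^ 2) = 1 := by
      rw [map_mul, map_pow, map_pow, map_pow, hI, ← hc, inv_pow, mul_inv_cancel]
    rw [ClassGroup.mk0_mul_eq_one_iff] at h1
    obtain ⟨k, hk⟩ := t.odd_card_classGroup
    have hI0 : Ideal.absNorm (I : Ideal (𝓞 K)) ≠ 0 := by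
      rw [Ne, Ideal.absNorm_eq_zero_iff]; exact nonZeroDivisors.ne_zero I.2
    refine t.not_isPrincipal_of_absNorm_eq (n := p ^ i * 2 ^ k * Ideal.absNorm (I : Ideal (𝓞 K)))
      ?_ ?_ h1
    · exact mul_ne_zero (mul_ne_zero (pow_ne_zero i t.res.prime_p.ne_zero) (by simp)) hI0
    · rw [Submonoid.coe_mul, SubmonoidClass.coe_pow, SubmonoidClass.coe_pow, SubmonoidClass.coe_pow,
        map_mul, map_mul, map_pow, map_pow, map_pow, hNP, hNT, hh, hk]
      ring
  refine nonempty_sylow_mulEquiv hP1 hT1 (fun c hc => ?_) (fun c hc => ?_) (fun c => ?_)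
    (fun c => ?_) P
  · exact t.hσ.eq_of_sq_eq_one t.odd_card_classGroup
      (fun J hJ => t.hA.isPrincipal_of_isPrincipal_sq t.coe_a_sq t.hτ t.coe_b_sq t.res hJ)
      t.exists_unit_norm hP1 hT1 hram hc
  · obtain ⟨I, hI⟩ := hinv c
    have h1 : ClassGroup.mk0 P' * ClassGroup.mk0 (I ^ 2) = 1 := by
      rw [map_pow, hI, ← hc, inv_pow, mul_inv_cancel]
    rw [ClassGroup.mk0_mul_eq_one_iff, SubmonoidClass.coe_pow] at h1
    exact t.not_isPrincipal_mul_sq (nonZeroDivisors.ne_zero I.2) hNP hpP h1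
  · simpa using hodd 0 c
  · simpa using hodd 1 c

end Tower

end TowerGroup

theorem exists_eq_add_mul_of_mem_adjoin {F K : Type*} [Field F] [Field K] [Algebra F K] {s : K}
    {d : F} (hd : algebraMap F K d = s ^ 2) {z : K} (hz : z ∈ F⟮s⟯) :
    ∃ x y : F, z = algebraMap F K x + algebraMap F K y * s := by
  have hs : IsIntegral F s := IsIntegral.of_pow two_pos (by rw [← hd]; exact isIntegral_algebraMap)
  rw [← IntermediateField.mem_toSubalgebra,
    adjoin_simple_toSubalgebra_of_isAlgebraic hs.isAlgebraic] at hz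
  induction hz using Algebra.adjoin_induction with
  | mem z hz => exact ⟨0, 1, by simp [Set.mem_singleton_iff.1 hz]⟩
  | algebraMap z => exact ⟨z, 0, by simp⟩
  | add z w _ _ hz hw =>
    obtain ⟨x, y, rfl⟩ := hz
    obtain ⟨x', y', rfl⟩ := hw
    exact ⟨x + x', y + y', by simp only [map_add]; ring⟩
  | mul z w _ _ hz hw =>
    obtain ⟨x, y, rfl⟩ := hz
    obtain ⟨x', y', rfl⟩ := hw
    exact ⟨x * x' + d * y * y', x * y' + x' * y, by simp only [map_add, map_mul, hd]; ring⟩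

theorem exists_eq_add_mul_of_mem_adjoin_union {F K : Type*} [Field F] [Field K] [Algebra F K]
    {S : Set K} {s : K} {d : F} (hd : algebraMap F K d = s ^ 2) {z : K}
    (hz : z ∈ adjoin F (S ∪ {s})) :
    ∃ x y : adjoin F S, z = x + y * s := by
  rw [← adjoin_adjoin_left, mem_restrictScalars] at hz
  exact exists_eq_add_mul_of_mem_adjoin (d := algebraMap F (adjoin F S) d)
    (by rw [← hd]; rfl) hz

theorem notMem_range_rat_of_sq {K : Type*} [Field K] [CharZero K] {z : K} {n : ℤ}
    (hz : z ^ 2 = n) (hn : ¬ IsSquare n) : z ∉ (algebraMap ℚ K).range := by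
  rintro ⟨x, rfl⟩
  apply hn
  rw [← Rat.isSquare_intCast_iff]
  refine ⟨x, (algebraMap ℚ K).injective ?_⟩
  rw [map_intCast, ← hz, map_mul, sq]

theorem Int.not_isSquare_of_neg {n : ℤ} (hn : n < 0) : ¬ IsSquare n := fun h => hn.not_ge h.nonneg

theorem Residues.nonempty_mulEquiv {p q : ℕ} (res : Residues p q) {K : Type*} [Field K]
    [NumberField K] {r s t : K} (hr : r ^ 2 = -2) (hs : s ^ 2 = -(q : K)) (ht : t ^ 2 = p)
    (hK : adjoin ℚ {r, s, t} = ⊤) (P : Sylow 2 (ClassGroup (𝓞 K))) :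
    Nonempty (↥(P : Subgroup (ClassGroup (𝓞 K))) ≃* Multiplicative (ZMod 2 × ZMod 2)) := by
  have hp := res.prime_p
  have hq := res.prime_q
  have hpZ : (0 : ℤ) < p := by exact_mod_cast hp.pos
  have hqZ : (0 : ℤ) < q := by exact_mod_cast hq.pos
  have hp2 : ¬ p ∣ 2 := fun h => by
    have := Nat.le_of_dvd two_pos h
    have := res.p_mod
    omega
  have hpq : ¬ p ∣ q := fun h => res.ne ((Nat.prime_dvd_prime_iff_eq hp hq).1 h)
  have hr2 : algebraMap ℚ K (-2) = r ^ 2 := by rw [hr, map_neg, map_ofNat]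
  have hs2 : algebraMap ℚ K (-q) = s ^ 2 := by rw [hs, map_neg, map_natCast]
  have ht2 : algebraMap ℚ K p = t ^ 2 := by rw [ht, map_natCast]
  have hr0 : r ∉ (algebraMap ℚ K).range :=
    notMem_range_rat_of_sq (n := -2) (by simp [hr]) (Int.not_isSquare_of_neg (by norm_num))
  have hs0 : s ∉ (algebraMap ℚ K).range :=
    notMem_range_rat_of_sq (n := -q) (by simp [hs]) (Int.not_isSquare_of_neg (by omega))
  have ht0 : t ∉ (algebraMap ℚ K).range := by
    refine notMem_range_rat_of_sq (n := p) (by simp [ht]) ?_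
    rw [Int.isSquare_natCast_iff]
    exact hp.prime.not_isSquare
  have hsr0 : s * r ∉ (algebraMap ℚ K).range := by
    refine notMem_range_rat_of_sq (n := (2 * q : ℕ)) (by push_cast; rw [mul_pow, hr, hs]; ring) ?_
    rw [Int.isSquare_natCast_iff]
    refine Residues.not_isSquare_of_factor res hq (Dvd.intro_left 2 rfl) fun h => ?_
    rw [sq, Nat.mul_dvd_mul_iff_right hq.pos] at h
    have := Nat.le_of_dvd two_pos h
    have := res.q_mod
    omega
  have htr0 : t * r ∉ (algebraMap ℚ K).range :=
    notMem_range_rat_of_sq (n := -2 * p) (by push_cast; rw [mul_pow, hr, ht]; ring)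
      (Int.not_isSquare_of_neg (by linarith))
  have hts0 : t * s ∉ (algebraMap ℚ K).range :=
    notMem_range_rat_of_sq (n := -(p * q)) (by push_cast; rw [mul_pow, hs, ht]; ring)
      (Int.not_isSquare_of_neg (by nlinarith))
  have htsr0 : t * s * r ∉ (algebraMap ℚ K).range := by
    refine notMem_range_rat_of_sq (n := (2 * q * p : ℕ))
      (by push_cast; rw [mul_pow, mul_pow, hr, hs, ht]; ring) ?_
    rw [Int.isSquare_natCast_iff]
    refine Residues.not_isSquare_of_factor res hp (Dvd.intro_left (2 * q) rfl) fun h => ?_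
    rw [sq, Nat.mul_dvd_mul_iff_right hp.pos, hp.dvd_mul] at h
    tauto
  let A : IntermediateField ℚ K := adjoin ℚ {r}
  let B : IntermediateField ℚ K := adjoin ℚ {s}
  let M : IntermediateField ℚ K := adjoin ℚ ({r} ∪ {s})
  have hAM : A ≤ M := adjoin.mono _ _ _ Set.subset_union_left
  have hBM : B ≤ M := adjoin.mono _ _ _ Set.subset_union_right
  let _ : Algebra A M := (IntermediateField.inclusion hAM).toRingHom.toAlgebra
  let _ : Algebra B M := (IntermediateField.inclusion hBM).toRingHom.toAlgebra
  have : IsScalarTower A M K := IsScalarTower.of_algebraMap_eq fun _ => rfl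
  have : IsScalarTower B M K := IsScalarTower.of_algebraMap_eq fun _ => rfl
  have notA {z : K} {n : ℚ} (hz : algebraMap ℚ K n = z ^ 2) (h1 : z ∉ (algebraMap ℚ K).range)
      (h2 : z * r ∉ (algebraMap ℚ K).range) : z ∉ A := by
    intro hzA
    obtain ⟨x, y, hxy⟩ := exists_eq_add_mul_of_mem_adjoin hr2 hzA
    exact (mem_or_mul_mem_of_sq_mem hr2 hz hxy).elim h1 h2
  have hsA : s ∉ A := notA hs2 hs0 hsr0
  have htA : t ∉ A := notA ht2 ht0 htr0
  have htsA : t * s ∉ A := notA (n := -(p * q))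
    (by rw [mul_pow, ← ht2, ← hs2, ← map_mul]; ring_nf) hts0 htsr0
  have hrB : r ∉ B := by
    intro hrB
    obtain ⟨x, y, hxy⟩ := exists_eq_add_mul_of_mem_adjoin hs2 hrB
    exact (mem_or_mul_mem_of_sq_mem hs2 hr2 hxy).elim hr0 (by rwa [mul_comm])
  have htM : t ∉ M := by
    intro htM
    obtain ⟨x, y, hxy⟩ := exists_eq_add_mul_of_mem_adjoin_union hs2 htM
    rcases mem_or_mul_mem_of_sq_mem (F := A) (d := algebraMap ℚ A (-q)) (e := algebraMap ℚ A p)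
      (by rw [← hs2]; rfl) (by rw [← ht2]; rfl) hxy with ⟨z, hz⟩ | ⟨z, hz⟩
    · exact htA (hz ▸ z.2)
    · exact htsA (hz ▸ z.2)
  obtain ⟨a, ha, ha2⟩ := exists_coe_eq_of_sq (x := (⟨r, mem_adjoin_simple_self ℚ r⟩ : A)) (n := -2)
    (Subtype.ext (show r ^ 2 = algebraMap A K ((-2 : ℤ) : A) by rw [map_intCast, hr]; norm_num))
  obtain ⟨b, hb, hb2⟩ := exists_coe_eq_of_sq (x := (⟨s, mem_adjoin_simple_self ℚ s⟩ : B)) (n := -q)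
    (Subtype.ext (by simpa using hs))
  obtain ⟨c, hc, hc2⟩ := exists_coe_eq_of_sq (x := t) (n := p) (by simpa using ht)
  have hrM : r ∈ M := hAM (mem_adjoin_simple_self ℚ r)
  have hsM : s ∈ M := hBM (mem_adjoin_simple_self ℚ s)
  have haM : algebraMap A M a = ⟨r, hrM⟩ := by rw [ha]; rfl
  have hbM : algebraMap B M b = ⟨s, hsM⟩ := by rw [hb]; rfl
  obtain ⟨ω, hω⟩ := exists_coe_eq_half (r := algebraMap B M b) (q := q)
    (by rw [hbM]; exact Subtype.ext (by simpa using hs)) (by have := res.q_mod; omega)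
  obtain ⟨ρ, hρ⟩ := exists_isQuadGen (F := ℚ) (L := A) (s := (a : A))
    ⟨-2, by rw [ha]; exact Subtype.ext hr2⟩
    (by rintro ⟨x, hx⟩; exact hr0 ⟨x, by rw [ha] at hx; exact congrArg Subtype.val hx⟩)
    (fun z => by
      obtain ⟨x, y, hxy⟩ := exists_eq_add_mul_of_mem_adjoin hr2 z.2
      exact ⟨x, y, by rw [ha]; exact Subtype.ext hxy⟩)
  obtain ⟨β, hβ⟩ := exists_isQuadGen (F := ℚ) (L := B) (s := (b : B))
    ⟨-q, by rw [hb]; exact Subtype.ext hs2⟩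
    (by rintro ⟨x, hx⟩; exact hs0 ⟨x, by rw [hb] at hx; exact congrArg Subtype.val hx⟩)
    (fun z => by
      obtain ⟨x, y, hxy⟩ := exists_eq_add_mul_of_mem_adjoin hs2 z.2
      exact ⟨x, y, by rw [hb]; exact Subtype.ext hxy⟩)
  obtain ⟨τ, hτ⟩ := exists_isQuadGen (F := A) (L := M) (s := algebraMap B M b)
    ⟨algebraMap ℚ A (-q), by rw [hbM]; exact Subtype.ext hs2⟩
    (by rintro ⟨x, hx⟩
        rw [hbM] at hx
        have : (x : K) = s := congrArg Subtype.val hx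
        exact hsA (this ▸ x.2))
    (fun z => by
      obtain ⟨x, y, hxy⟩ := exists_eq_add_mul_of_mem_adjoin_union hs2 z.2
      exact ⟨x, y, by rw [hbM]; exact Subtype.ext hxy⟩)
  obtain ⟨κ, hκ⟩ := exists_isQuadGen (F := B) (L := M) (s := algebraMap A M a)
    ⟨algebraMap ℚ B (-2), by rw [haM]; exact Subtype.ext hr2⟩
    (by rintro ⟨x, hx⟩
        rw [haM] at hx
        have : (x : K) = r := congrArg Subtype.val hx
        exact hrB (this ▸ x.2))
    (fun z => by
      obtain ⟨x, y, hxy⟩ := exists_eq_add_mul_of_mem_adjoin_union (S := {s}) hr2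
        (by rw [Set.union_comm]; exact z.2)
      exact ⟨x, y, by rw [haM]; exact Subtype.ext hxy⟩)
  obtain ⟨σ, hσ⟩ := exists_isQuadGen (F := M) (L := K) (s := (c : K))
    ⟨algebraMap ℚ M p, by rw [hc, ← ht2]; rfl⟩
    (by rintro ⟨x, hx⟩
        rw [hc] at hx
        exact htM (hx ▸ x.2))
    (fun z => by
      rw [hc]
      refine exists_eq_add_mul_of_mem_adjoin_union ht2 ?_
      rw [show ({r} ∪ {s} ∪ {t} : Set K) = {r, s, t} by ext; simp; tauto, hK]
      exact mem_top)
  have tower : Tower p q a b ω c ρ β κ τ σ :=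
    { res := res
      a_sq := by simpa using ha2
      b_sq := by simpa using hb2
      s_sq := by simpa using hc2
      two_mul_ω := RingOfIntegers.coe_injective (by
        have : algebraMap (𝓞 M) M (algebraMap (𝓞 B) (𝓞 M) b) = algebraMap B M b := rfl
        simp only [map_mul, map_add, map_one, map_ofNat, hω, this]
        ring)
      hA := hρ
      hB := hβ
      hκ := hκ
      hτ := hτ
      hσ := hσ }
  exact tower.nonempty_mulEquiv P

theorem Complex.ofReal_sqrt_sq {x : ℝ} (hx : 0 ≤ x) : ((√x : ℝ) : ℂ) ^ 2 = x := by
  rw [← Complex.ofReal_pow, Real.sq_sqrt hx]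

theorem Complex.I_mul_sqrt_two_sq : (Complex.I * ((√2 : ℝ) : ℂ)) ^ 2 = -2 := by
  rw [mul_pow, Complex.I_sq, Complex.ofReal_sqrt_sq zero_le_two]
  norm_num

theorem statement8 (p q : ℕ) (h : Cond2 p q) [NumberField ↥(Ff p q)]
    (P : Sylow 2 (ClassGroup (𝓞 ↥(Ff p q)))) :
    Nonempty (↥(P : Subgroup (ClassGroup (𝓞 ↥(Ff p q)))) ≃*
      Multiplicative (ZMod 2 × ZMod 2)) := by
  have hr2 := Complex.I_mul_sqrt_two_sq
  have ht2 : ((√p : ℝ) : ℂ) ^ 2 = p := by simp [Complex.ofReal_sqrt_sq]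
  have hu2 : ((√(2 * q) : ℝ) : ℂ) ^ 2 = 2 * q := by
    rw [Complex.ofReal_sqrt_sq (by positivity)]
    simp
  let r : Ff p q := ⟨_, subset_adjoin ℚ _ (Set.mem_insert_of_mem _ (Set.mem_insert_of_mem _ rfl))⟩
  let t : Ff p q := ⟨_, subset_adjoin ℚ _ (Set.mem_insert _ _)⟩
  let u : Ff p q := ⟨_, subset_adjoin ℚ _ (Set.mem_insert_of_mem _ (Set.mem_insert _ _))⟩
  have hr : r ^ 2 = -2 := Subtype.ext hr2
  have ht : t ^ 2 = p := Subtype.ext ht2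
  have hu : u ^ 2 = 2 * q := Subtype.ext hu2
  have hs : (u * r / 2) ^ 2 = -q := by
    rw [div_pow, mul_pow, hu, hr]
    ring
  let f : Ff p q →ₐ[ℚ] ℂ := (Ff p q).val.toRingHom.toRatAlgHom
  refine h.residues.nonempty_mulEquiv hr hs ht ?_ P
  refine map_injective f (le_antisymm (map_mono f le_top) ?_)
  rw [adjoin_map]
  suffices Ff p q ≤ adjoin ℚ (Set.image f {r, u * r / 2, t}) by
    rintro _ ⟨x, -, rfl⟩
    exact this x.2
  have hr' := subset_adjoin ℚ (Set.image f {r, u * r / 2, t}) ⟨r, by simp, rfl⟩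
  have hs' := subset_adjoin ℚ (Set.image f {r, u * r / 2, t}) ⟨u * r / 2, by simp, rfl⟩
  have ht' := subset_adjoin ℚ (Set.image f {r, u * r / 2, t}) ⟨t, by simp, rfl⟩
  have hu' : f u = -(f (u * r / 2) * f r) := by
    rw [← map_mul, ← map_neg]
    congr 1
    linear_combination (u / 2) * hr
  refine adjoin_le_iff.2 ?_
  rintro _ (rfl | rfl | rfl)
  · exact ht'
  · change f u ∈ _
    rw [hu']
    exact neg_mem (mul_mem hs' hr')
  · exact hr'
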